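/- Let n ≥ 1, let 1 ≤ k ≤ n, and let f ∈ Q₀ⁿ. Then ∫_{O(n)} ( ∫_{H₀ᵏ} f(g·y) dλ_k(y) )^n dν(g) ≤ (ω_k^n / ω_n^k) · ‖f‖₁^k · ‖f‖_∞^{n−k}, where ν is the Haar probability measure on the orthogonal group O(n), H₀ᵏ = span(e₁,…,e_k), and λ_k is Lebesgue measure on H₀ᵏ. (This is the functional analog of Grinberg's inequality: the left-hand side equals the average over the Grassmannian G_{n,k}, with its rotation-invariant probability measure, of ‖S_H f‖_{L¹(H)}^n.) -/

import Mathlib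

open MeasureTheory

noncomputable section

/-- `ℝⁿ` with its Euclidean structure. -/
abbrev Eucl (n : ℕ) := EuclideanSpace ℝ (Fin n)

/-- `f : ℝⁿ → [0,∞)` is log-concave:
`f(tx+(1−t)y) ≥ f(x)^t · f(y)^(1−t)` for all `x, y` and `t ∈ (0,1)`. -/
def IsLogConcave {n : ℕ} (f : Eucl n → ℝ) : Prop :=
  ∀ x y : Eucl n, ∀ t : ℝ, 0 < t → t < 1 →
    f x ^ t * f y ^ (1 - t) ≤ f (t • x + (1 - t) • y)

/-- The class `Q₀ⁿ`: nonnegative, log-concave, upper semicontinuous, integrable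
functions with positive integral. -/
def MemQ0 {n : ℕ} (f : Eucl n → ℝ) : Prop :=
  (∀ x, 0 ≤ f x) ∧ IsLogConcave f ∧ UpperSemicontinuous f ∧
    Integrable f ∧ 0 < ∫ x, f x

/-- `‖f‖_∞ = sup f`. -/
def supNorm {n : ℕ} (f : Eucl n → ℝ) : ℝ := ⨆ x, f x

/-- `‖f‖_p = (∫ f^p)^(1/p)`. -/
def lpNorm {n : ℕ} (p : ℝ) (f : Eucl n → ℝ) : ℝ := (∫ x, f x ^ p) ^ (1 / p)

/-- `‖P_H f‖_{L¹(H)} = ∫_H sup_{z ∈ H⊥} f(y+z) dλ_H(y)`, the `L¹(H)`-norm of the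
projection of `f` onto the subspace `H` (with the Lebesgue measure on `H` induced
by the Euclidean structure). -/
def projL1 {n : ℕ} (f : Eucl n → ℝ) (H : Submodule ℝ (Eucl n)) : ℝ :=
  ∫ y : H, ⨆ z : Hᗮ, f ((y : Eucl n) + (z : Eucl n))

/-- `‖S_H f‖_{L¹(H)} = ∫_H f dλ_H`, the integral of the section `f|_H`. -/
def sectL1 {n : ℕ} (f : Eucl n → ℝ) (H : Submodule ℝ (Eucl n)) : ℝ :=
  ∫ y : H, f (y : Eucl n)

/-- The orthogonal group `O(n)` acting on `ℝⁿ`. -/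
abbrev OG (n : ℕ) := Matrix.orthogonalGroup (Fin n) ℝ

instance (n : ℕ) : MeasurableSpace (OG n) := borel _

/-- The volume `ω_d` of the Euclidean unit ball in `ℝ^d`. -/
def ballVol (d : ℕ) : ℝ := (volume (Metric.closedBall (0 : Eucl d) 1)).toReal

/-- The coordinate subspace `H₀ᵏ = span(e₁, …, e_k)` of `ℝⁿ`. -/
def stdSubspace (n k : ℕ) : Submodule ℝ (Eucl n) :=
  Submodule.span ℝ {v | ∃ i : Fin n, (i : ℕ) < k ∧ v = EuclideanSpace.single i 1}

/-!
For a nonnegative function `q` on `ℝⁿ`, the Blaschke–Petkantschin formula expresses `(∫ q)ᵏ`, an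
integral over `k` independent points of `ℝⁿ`, as a constant times the average over rotations of the
moment of order `n - k` of the volume of the parallelotope spanned by `k` independent points drawn
from the section of `q` by the rotated `k`-plane. It is obtained by unfolding the integral over
`k × n` matrices along the orbits of `GL(k)`.

Busemann's inequality bounds these moments below: among the densities on `ℝᵏ` with values in
`[0, 1]` and given mass, the indicator of the centred ball has the smallest moment, which by
homogeneity is proportional to the `n`-th power of the mass. To prove it, take a measure of least
second moment among those of the given mass whose determinant moment does not exceed that of the
given one; it exists by compactness. Steiner symmetrization does not increase the determinant moment
and strictly decreases the second moment of any density it changes, so the minimizer is symmetric in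
every direction and is therefore the ball.

The constant is identified by applying the formula to the indicator of the unit ball of `ℝⁿ`, and
dividing by `sup f` reduces the general case to densities at most `1`.
-/

open Set Filter Topology
open scoped ENNReal

section ProductMeasures

theorem lintegral_fin_prod_eq_prod {k : ℕ} {X : Fin k → Type*} [∀ i, MeasurableSpace (X i)]
    (μ : ∀ i, Measure (X i)) [∀ i, SigmaFinite (μ i)] {g : ∀ i, X i → ℝ≥0∞}
    (hg : ∀ i, Measurable (g i)) :
    ∫⁻ x, ∏ i, g i (x i) ∂Measure.pi μ = ∏ i, ∫⁻ x, g i x ∂μ i := by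
  induction k with
  | zero => simp
  | succ k ih =>
    have hg' : Measurable fun x : ∀ i : Fin k, X i.succ => ∏ i, g i.succ (x i) := by fun_prop
    calc ∫⁻ x, ∏ i, g i (x i) ∂Measure.pi μ
        = ∫⁻ z : X 0 × ∀ i : Fin k, X i.succ, g 0 z.1 * ∏ i, g i.succ (z.2 i)
            ∂(μ 0).prod (Measure.pi fun i => μ i.succ) := by
          rw [← (measurePreserving_piFinSuccAbove μ 0).symm.lintegral_comp (by fun_prop)]
          simp only [Fin.prod_univ_succ]
          rfl
      _ = ∏ i, ∫⁻ x, g i x ∂μ i := by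
          rw [lintegral_prod_mul (hg 0).aemeasurable hg'.aemeasurable,
            ih (fun i => μ i.succ) fun i => hg i.succ, Fin.prod_univ_succ]

theorem pi_withDensity {k : ℕ} {X : Fin k → Type*} [∀ i, MeasurableSpace (X i)]
    (μ : ∀ i, Measure (X i)) [∀ i, SigmaFinite (μ i)] {g : ∀ i, X i → ℝ≥0∞}
    (hg : ∀ i, Measurable (g i)) [∀ i, SigmaFinite ((μ i).withDensity (g i))] :
    Measure.pi (fun i => (μ i).withDensity (g i)) =
      (Measure.pi μ).withDensity fun x => ∏ i, g i (x i) := by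
  refine Measure.pi_eq fun s hs => ?_
  have : ∀ i, SigmaFinite ((μ i).restrict (s i)) := fun i => inferInstance
  rw [withDensity_apply _ (MeasurableSet.univ_pi hs), Measure.restrict_pi_pi,
    lintegral_fin_prod_eq_prod _ hg]
  exact Finset.prod_congr rfl fun i _ => (withDensity_apply _ (hs i)).symm

theorem lintegral_pi_withDensity {k : ℕ} {X : Fin k → Type*} [∀ i, MeasurableSpace (X i)]
    (μ : ∀ i, Measure (X i)) [∀ i, SigmaFinite (μ i)] {g : ∀ i, X i → ℝ≥0∞}
    (hg : ∀ i, Measurable (g i)) [∀ i, SigmaFinite ((μ i).withDensity (g i))]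
    {u : (∀ i, X i) → ℝ≥0∞} (hu : Measurable u) :
    ∫⁻ x, u x ∂Measure.pi (fun i => (μ i).withDensity (g i)) =
      ∫⁻ x, (∏ i, g i (x i)) * u x ∂Measure.pi μ := by
  rw [pi_withDensity μ hg, lintegral_withDensity_eq_lintegral_mul _ (by fun_prop) hu]
  rfl

theorem sigmaFinite_withDensity_of_le_one {X : Type*} [MeasurableSpace X] {μ : Measure X}
    [SigmaFinite μ] {g : X → ℝ≥0∞} (hg1 : ∀ x, g x ≤ 1) : SigmaFinite (μ.withDensity g) :=
  SigmaFinite.withDensity_of_ne_top' fun x => ne_top_of_le_ne_top ENNReal.one_ne_top (hg1 x)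

theorem withDensity_le_self_of_le_one {X : Type*} [MeasurableSpace X] {μ : Measure X}
    {g : X → ℝ≥0∞} (hg1 : ∀ x, g x ≤ 1) : μ.withDensity g ≤ μ :=
  (withDensity_mono (Eventually.of_forall hg1)).trans_eq withDensity_one

end ProductMeasures

section ConvexOrder

variable {E E' : Type*} [NormedAddCommGroup E] [NormedSpace ℝ E] [FiniteDimensional ℝ E]
  [NormedAddCommGroup E'] [NormedSpace ℝ E'] [FiniteDimensional ℝ E']

theorem continuous_of_convexOn_univ {φ : E → ℝ} (hφ : ConvexOn ℝ univ φ) : Continuous φ :=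
  continuousOn_univ.1 (hφ.continuousOn isOpen_univ)

variable [MeasurableSpace E] [BorelSpace E] [MeasurableSpace E'] [BorelSpace E']

/-- The convex order on measures, tested on nonnegative convex functions so that no integrability
is required. -/
def ConvexOrderLE (μ ν : Measure E) : Prop :=
  ∀ φ : E → ℝ, ConvexOn ℝ univ φ → (∀ x, 0 ≤ φ x) →
    ∫⁻ x, ENNReal.ofReal (φ x) ∂μ ≤ ∫⁻ x, ENNReal.ofReal (φ x) ∂ν

namespace ConvexOrderLE

theorem prod {μ₁ ν₁ : Measure E} {μ₂ ν₂ : Measure E'} [SFinite μ₁] [SFinite ν₁] [SFinite μ₂]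
    [SFinite ν₂] (h₁ : ConvexOrderLE μ₁ ν₁) (h₂ : ConvexOrderLE μ₂ ν₂) :
    ConvexOrderLE (μ₁.prod μ₂) (ν₁.prod ν₂) := by
  intro φ hφ hφ0
  have hm : Measurable fun z => ENNReal.ofReal (φ z) :=
    (continuous_of_convexOn_univ hφ).measurable.ennreal_ofReal
  calc ∫⁻ z, ENNReal.ofReal (φ z) ∂μ₁.prod μ₂
      = ∫⁻ x, ∫⁻ y, ENNReal.ofReal (φ (x, y)) ∂μ₂ ∂μ₁ := lintegral_prod _ hm.aemeasurable
    _ ≤ ∫⁻ x, ∫⁻ y, ENNReal.ofReal (φ (x, y)) ∂ν₂ ∂μ₁ := lintegral_mono fun x =>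
        h₂ _ (hφ.comp_affineMap ((AffineMap.const ℝ E' x).prod (AffineMap.id ℝ E'))) fun _ => hφ0 _
    _ = ∫⁻ y, ∫⁻ x, ENNReal.ofReal (φ (x, y)) ∂μ₁ ∂ν₂ := lintegral_lintegral_swap hm.aemeasurable
    _ ≤ ∫⁻ y, ∫⁻ x, ENNReal.ofReal (φ (x, y)) ∂ν₁ ∂ν₂ := lintegral_mono fun y =>
        h₁ _ (hφ.comp_affineMap ((AffineMap.id ℝ E).prod (AffineMap.const ℝ E y))) fun _ => hφ0 _
    _ = ∫⁻ z, ENNReal.ofReal (φ z) ∂ν₁.prod ν₂ := (lintegral_prod_symm _ hm.aemeasurable).symm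

theorem pi {k : ℕ} {μ ν : Fin k → Measure E} [∀ i, SigmaFinite (μ i)] [∀ i, SigmaFinite (ν i)]
    (h : ∀ i, ConvexOrderLE (μ i) (ν i)) : ConvexOrderLE (Measure.pi μ) (Measure.pi ν) := by
  induction k with
  | zero => rw [Subsingleton.elim μ ν]; exact fun _ _ _ => le_rfl
  | succ k ih =>
    intro φ hφ hφ0
    have hφm : Measurable fun x => ENNReal.ofReal (φ x) :=
      (continuous_of_convexOn_univ hφ).measurable.ennreal_ofReal
    rw [← (measurePreserving_piFinSuccAbove μ 0).symm.lintegral_comp hφm,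
      ← (measurePreserving_piFinSuccAbove ν 0).symm.lintegral_comp hφm]
    have hcons : ⇑(MeasurableEquiv.piFinSuccAbove (fun _ : Fin (k + 1) => E) 0).symm =
        Fin.consLinearEquiv ℝ fun _ : Fin (k + 1) => E := by
      funext z
      simp only [MeasurableEquiv.piFinSuccAbove_symm_apply, Fin.insertNthEquiv_zero]
      rfl
    refine (h 0).prod (ih fun i => h i.succ) _ ?_ fun _ => hφ0 _
    rw [hcons]
    exact hφ.comp_linearMap (Fin.consLinearEquiv ℝ fun _ : Fin (k + 1) => E).toLinearMap

end ConvexOrderLE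

theorem exists_chord {φ : ℝ → ℝ} (hφ : ConvexOn ℝ univ φ) {p q : ℝ} (hpq : p < q) (a : ℝ) :
    ∃ c s : ℝ, (∀ t ∈ Icc p q, φ t ≤ c + s * (t - a)) ∧ ∀ t ∉ Icc p q, c + s * (t - a) ≤ φ t := by
  set s := (φ q - φ p) / (q - p) with hs
  have hsq : s * (q - p) = φ q - φ p := div_mul_cancel₀ _ (sub_pos.2 hpq).ne'
  refine ⟨φ p + s * (a - p), s, fun t ht => ?_, fun t ht => ?_⟩
  · rcases ht.1.eq_or_lt with rfl | hpt
    · linarith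
    have := hφ.secant_mono (mem_univ p) (mem_univ t) (mem_univ q) hpt.ne' hpq.ne' ht.2
    rw [← hs, div_le_iff₀ (sub_pos.2 hpt)] at this
    linarith [hsq]
  · rcases lt_or_ge t p with htp | hpt
    · have := hφ.secant_mono (mem_univ p) (mem_univ t) (mem_univ q) htp.ne hpq.ne'
        (htp.trans hpq).le
      rw [← hs, div_le_iff_of_neg (sub_neg.2 htp)] at this
      linarith [hsq]
    · have hqt : q < t := not_le.1 fun h => ht ⟨hpt, h⟩
      have := hφ.secant_mono (mem_univ p) (mem_univ q) (mem_univ t) hpq.ne' (hpq.trans hqt).ne'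
        hqt.le
      rw [← hs, le_div_iff₀ (sub_pos.2 (hpq.trans hqt))] at this
      linarith [hsq]

/-- The interval carrying the uniform measure with the same mass and barycentre as `μ`. -/
def equalizingIcc (μ : Measure ℝ) : Set ℝ :=
  Icc ((⨍ t, t ∂μ) - μ.real univ / 2) ((⨍ t, t ∂μ) + μ.real univ / 2)

theorem setIntegral_equalizingIcc_affine {μ : Measure ℝ} [IsFiniteMeasure μ]
    (hμ : Integrable (fun t => t) μ) (c s : ℝ) :
    ∫ t in equalizingIcc μ, (c + s * (t - ⨍ t, t ∂μ)) = ∫ t, (c + s * (t - ⨍ t, t ∂μ)) ∂μ := by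
  have hℓ : 0 ≤ μ.real univ := measureReal_nonneg
  have hmean : ∫ t, (t - ⨍ t, t ∂μ) ∂μ = 0 := integral_sub_average μ _
  have hint : Integrable (fun t => t - ⨍ t, t ∂μ) μ := hμ.sub (integrable_const _)
  rw [integral_add (integrable_const c) (hint.const_mul s), integral_const_mul, hmean,
    equalizingIcc, integral_Icc_eq_integral_Ioc, ← intervalIntegral.integral_of_le (by linarith),
    intervalIntegral.integral_add intervalIntegrable_const
      (Continuous.intervalIntegrable (by fun_prop) _ _), intervalIntegral.integral_const,
    intervalIntegral.integral_const_mul, intervalIntegral.integral_comp_sub_right (fun t => t),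
    integral_id, integral_const, smul_eq_mul, smul_eq_mul]
  ring

theorem convexOrderLE_restrict_equalizingIcc {μ : Measure ℝ} [IsFiniteMeasure μ]
    (hle : μ ≤ volume) (hμ : Integrable (fun t => t) μ) :
    ConvexOrderLE (volume.restrict (equalizingIcc μ)) μ := by
  intro φ hφ hφ0
  rcases (measureReal_nonneg : 0 ≤ μ.real univ).eq_or_lt with h0 | hpos
  · simp [equalizingIcc, ← h0]
  have hφc := continuous_of_convexOn_univ hφ
  by_cases htop : ∫⁻ t, ENNReal.ofReal (φ t) ∂μ = ∞
  · exact htop ▸ le_top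
  set I := equalizingIcc μ
  have hIm : MeasurableSet I := measurableSet_Icc
  obtain ⟨c, s, hin, hout⟩ := exists_chord hφ
    (show (⨍ t, t ∂μ) - μ.real univ / 2 < (⨍ t, t ∂μ) + μ.real univ / 2 by linarith) (⨍ t, t ∂μ)
  set L : ℝ → ℝ := fun t => c + s * (t - ⨍ t, t ∂μ)
  have hLc : Continuous L := by fun_prop
  have hLμ : Integrable L μ :=
    (integrable_const c).add ((hμ.sub (integrable_const _)).const_mul s)
  have hφμ : Integrable φ μ := ⟨hφc.aestronglyMeasurable,
    (hasFiniteIntegral_iff_ofReal (Eventually.of_forall hφ0)).2 (lt_top_iff_ne_top.2 htop)⟩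
  have hφI : IntegrableOn φ I := hφc.integrableOn_Icc
  have hLI : IntegrableOn L I := hLc.integrableOn_Icc
  have hgap : ∫ t, (L t - φ t) ∂μ ≤ ∫ t in I, (L t - φ t) := by
    have hint : Integrable (fun t => L t - φ t) μ := hLμ.sub hφμ
    rw [← integral_add_compl hIm hint]
    refine (add_le_of_nonpos_right (setIntegral_nonpos hIm.compl fun t ht =>
      sub_nonpos.2 (hout t ht))).trans ?_
    exact integral_mono_measure (Measure.restrict_mono le_rfl hle)
      ((ae_restrict_iff' hIm).2 (Eventually.of_forall fun t ht => sub_nonneg.2 (hin t ht)))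
      (hLI.sub hφI)
  rw [integral_sub hLμ hφμ, integral_sub hLI hφI, setIntegral_equalizingIcc_affine hμ] at hgap
  rw [← ofReal_integral_eq_lintegral_ofReal hφI (Eventually.of_forall hφ0),
    ← ofReal_integral_eq_lintegral_ofReal hφμ (Eventually.of_forall hφ0)]
  exact ENNReal.ofReal_le_ofReal (by linarith)

theorem setLIntegral_le_setLIntegral_add_of_even {μ : Measure E} [μ.IsNegInvariant] {φ : E → ℝ}
    (hφ : ConvexOn ℝ univ φ) (hφ0 : ∀ x, 0 ≤ φ x) (heven : ∀ x, φ (-x) = φ x) {B : Set E}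
    (hB : -B = B) (hBm : MeasurableSet B) (a : E) :
    ∫⁻ x in B, ENNReal.ofReal (φ x) ∂μ ≤ ∫⁻ x in B, ENNReal.ofReal (φ (x + a)) ∂μ := by
  have hφm : Measurable φ := (continuous_of_convexOn_univ hφ).measurable
  have hreflect : ∫⁻ x in B, ENNReal.ofReal (φ (x - a)) ∂μ =
      ∫⁻ x in B, ENNReal.ofReal (φ (x + a)) ∂μ := by
    have := (Measure.measurePreserving_neg μ).setLIntegral_comp_preimage hBm
      (f := fun x => ENNReal.ofReal (φ (x + a))) (by fun_prop)
    rw [← this, show Neg.neg ⁻¹' B = B from hB]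
    refine lintegral_congr fun x => ?_
    rw [← heven, neg_sub, sub_eq_neg_add]
  have hmid : ∀ x, 2 * ENNReal.ofReal (φ x) ≤
      ENNReal.ofReal (φ (x + a)) + ENNReal.ofReal (φ (x - a)) := by
    intro x
    rw [← ENNReal.ofReal_add (hφ0 _) (hφ0 _), ← ENNReal.ofReal_ofNat,
      ← ENNReal.ofReal_mul two_pos.le]
    refine ENNReal.ofReal_le_ofReal ?_
    have := hφ.2 (mem_univ (x + a)) (mem_univ (x - a)) one_half_pos.le
      one_half_pos.le (add_halves 1)
    rw [show (1 / 2 : ℝ) • (x + a) + (1 / 2 : ℝ) • (x - a) = x by module] at this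
    simp only [smul_eq_mul] at this
    linarith
  have h2 := lintegral_mono (μ := μ.restrict B) hmid
  rw [lintegral_const_mul _ (by fun_prop), lintegral_add_left (by fun_prop), hreflect,
    ← two_mul] at h2
  exact (ENNReal.mul_le_mul_iff_right two_ne_zero ENNReal.ofNat_ne_top).1 h2

theorem lintegral_pi_centred_Icc_le {k : ℕ} {φ : (Fin k → ℝ) → ℝ} (hφ : ConvexOn ℝ univ φ)
    (hφ0 : ∀ x, 0 ≤ φ x) (heven : ∀ x, φ (-x) = φ x) {μ : Fin k → Measure ℝ}
    [∀ i, IsFiniteMeasure (μ i)] (hle : ∀ i, μ i ≤ volume)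
    (hμ : ∀ i, Integrable (fun t => t) (μ i)) :
    ∫⁻ t, ENNReal.ofReal (φ t) ∂Measure.pi (fun i =>
        volume.restrict (Icc (-((μ i).real univ / 2)) ((μ i).real univ / 2))) ≤
      ∫⁻ t, ENNReal.ofReal (φ t) ∂Measure.pi μ := by
  set h : Fin k → ℝ := fun i => (μ i).real univ / 2
  set a : Fin k → ℝ := fun i => ⨍ t, t ∂μ i
  have hφm : Measurable φ := (continuous_of_convexOn_univ hφ).measurable
  have hshift : (fun t => t + a) ⁻¹' Icc (a - h) (a + h) = Icc (-h) h := by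
    rw [preimage_add_const_Icc]; congr 1 <;> abel
  calc ∫⁻ t, ENNReal.ofReal (φ t) ∂Measure.pi (fun i => volume.restrict (Icc (-h i) (h i)))
      = ∫⁻ t in Icc (-h) h, ENNReal.ofReal (φ t) := by
        rw [← Measure.restrict_pi_pi, pi_univ_Icc]; rfl
    _ ≤ ∫⁻ t in Icc (-h) h, ENNReal.ofReal (φ (t + a)) :=
        setLIntegral_le_setLIntegral_add_of_even hφ hφ0 heven (by simp) measurableSet_Icc a
    _ = ∫⁻ t in Icc (a - h) (a + h), ENNReal.ofReal (φ t) := by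
        rw [← hshift]
        exact (measurePreserving_add_right volume a).setLIntegral_comp_preimage measurableSet_Icc
          hφm.ennreal_ofReal
    _ = ∫⁻ t, ENNReal.ofReal (φ t) ∂Measure.pi fun i => volume.restrict (equalizingIcc (μ i)) := by
        rw [← Measure.restrict_pi_pi]
        simp only [equalizingIcc, pi_univ_Icc]
        rfl
    _ ≤ ∫⁻ t, ENNReal.ofReal (φ t) ∂Measure.pi μ :=
        ConvexOrderLE.pi (fun i => convexOrderLE_restrict_equalizingIcc (hle i) (hμ i)) φ hφ hφ0

end ConvexOrder

section Steiner

variable {Y : Type*} {g : ℝ × Y → ℝ≥0∞}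

/-- Half the length of the line section of the density `g` over `y`. It is `0` when the section has
infinite mass. -/
def halfLength (g : ℝ × Y → ℝ≥0∞) (y : Y) : ℝ :=
  (∫⁻ t, g (t, y)).toReal / 2

/-- Steiner symmetrization of the density `g` along the first coordinate: every line section is
replaced by the indicator of the centred interval with the same mass. -/
def steiner (g : ℝ × Y → ℝ≥0∞) (z : ℝ × Y) : ℝ≥0∞ :=
  (Icc (-halfLength g z.2) (halfLength g z.2)).indicator 1 z.1

/-- The amount by which Steiner symmetrization decreases the density of `∫ t² g (t, y)`. -/
def steinerDefect (g : ℝ × Y → ℝ≥0∞) (z : ℝ × Y) : ℝ≥0∞ :=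
  ENNReal.ofReal (|z.1 ^ 2 - halfLength g z.2 ^ 2| * |(g z).toReal - (steiner g z).toReal|)

theorem halfLength_nonneg (g : ℝ × Y → ℝ≥0∞) (y : Y) : 0 ≤ halfLength g y := by
  unfold halfLength
  positivity

theorem steiner_le_one (g : ℝ × Y → ℝ≥0∞) (z : ℝ × Y) : steiner g z ≤ 1 :=
  indicator_le_self' (fun _ _ => zero_le) _

theorem lintegral_steiner_line {y : Y} (hy : ∫⁻ t, g (t, y) ≠ ∞) :
    ∫⁻ t, steiner g (t, y) = ∫⁻ t, g (t, y) := by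
  simp only [steiner, lintegral_indicator_one measurableSet_Icc, Real.volume_Icc, halfLength]
  rw [sub_neg_eq_add, add_halves, ENNReal.ofReal_toReal hy]

theorem steiner_mul_sq_add_steinerDefect (hg1 : ∀ z, g z ≤ 1) (t : ℝ) (y : Y) :
    steiner g (t, y) * ENNReal.ofReal (t ^ 2) + steinerDefect g (t, y)
        + g (t, y) * ENNReal.ofReal (halfLength g y ^ 2)
      = g (t, y) * ENNReal.ofReal (t ^ 2)
        + steiner g (t, y) * ENNReal.ofReal (halfLength g y ^ 2) := by
  obtain ⟨γ, hγ0, hγ1, hγ⟩ : ∃ γ : ℝ, 0 ≤ γ ∧ γ ≤ 1 ∧ g (t, y) = ENNReal.ofReal γ :=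
    ⟨(g (t, y)).toReal, ENNReal.toReal_nonneg, ENNReal.toReal_mono ENNReal.one_ne_top (hg1 _),
      (ENNReal.ofReal_toReal (ne_top_of_le_ne_top ENNReal.one_ne_top (hg1 _))).symm⟩
  have h0 := halfLength_nonneg g y
  simp only [steinerDefect, steiner, hγ, ENNReal.toReal_ofReal hγ0]
  set h := halfLength g y
  by_cases ht : t ∈ Icc (-h) h
  · have hth : t ^ 2 ≤ h ^ 2 := sq_le_sq' ht.1 ht.2
    simp only [indicator_of_mem ht, Pi.one_apply, one_mul, ENNReal.toReal_one]
    rw [abs_of_nonpos (sub_nonpos.2 hth), abs_of_nonpos (sub_nonpos.2 hγ1),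
      ← ENNReal.ofReal_mul hγ0, ← ENNReal.ofReal_mul hγ0,
      ← ENNReal.ofReal_add (by positivity) (by nlinarith),
      ← ENNReal.ofReal_add (by nlinarith) (by positivity),
      ← ENNReal.ofReal_add (by positivity) (by positivity)]
    congr 1
    ring
  · have hth : h ^ 2 ≤ t ^ 2 := by
      rw [mem_Icc, ← abs_le, not_le] at ht
      exact sq_le_sq.2 (by rw [abs_of_nonneg h0]; exact ht.le)
    simp only [indicator_of_notMem ht, zero_mul, zero_add, add_zero, ENNReal.toReal_zero, sub_zero]
    rw [abs_of_nonneg (sub_nonneg.2 hth), abs_of_nonneg hγ0,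
      ← ENNReal.ofReal_mul hγ0, ← ENNReal.ofReal_mul hγ0,
      ← ENNReal.ofReal_add (mul_nonneg (sub_nonneg.2 hth) hγ0) (by positivity)]
    congr 1
    ring

variable [MeasurableSpace Y]

@[fun_prop]
theorem measurable_halfLength (hg : Measurable g) : Measurable (halfLength g) :=
  hg.lintegral_prod_left'.ennreal_toReal.div_const 2

@[fun_prop]
theorem measurable_steiner (hg : Measurable g) : Measurable (steiner g) := by
  have hh : Measurable fun z : ℝ × Y => halfLength g z.2 :=
    (measurable_halfLength hg).comp measurable_snd
  exact measurable_one.indicator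
    ((measurableSet_le hh.neg measurable_fst).inter (measurableSet_le measurable_fst hh))

@[fun_prop]
theorem measurable_steinerDefect (hg : Measurable g) : Measurable (steinerDefect g) := by
  unfold steinerDefect
  simp only [← Real.norm_eq_abs]
  fun_prop

variable {ρ : Measure Y} [SFinite ρ]

theorem ae_lintegral_line_ne_top (hg : Measurable g) (hfin : ∫⁻ z, g z ∂(volume.prod ρ) ≠ ∞) :
    ∀ᵐ y ∂ρ, ∫⁻ t, g (t, y) ≠ ∞ := by
  rw [lintegral_prod_symm _ hg.aemeasurable] at hfin
  filter_upwards [ae_lt_top hg.lintegral_prod_left' hfin] with y hy using hy.ne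

theorem lintegral_steiner_mul_snd (hg : Measurable g) (hfin : ∫⁻ z, g z ∂(volume.prod ρ) ≠ ∞)
    {N : Y → ℝ≥0∞} (hN : Measurable N) :
    ∫⁻ z, steiner g z * N z.2 ∂(volume.prod ρ) = ∫⁻ z, g z * N z.2 ∂(volume.prod ρ) := by
  rw [lintegral_prod_symm _ (by fun_prop), lintegral_prod_symm _ (by fun_prop)]
  refine lintegral_congr_ae ?_
  filter_upwards [ae_lintegral_line_ne_top hg hfin] with y hy
  rw [lintegral_mul_const _ (by fun_prop), lintegral_mul_const _ (by fun_prop),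
    lintegral_steiner_line hy]

theorem lintegral_steiner (hg : Measurable g) (hfin : ∫⁻ z, g z ∂(volume.prod ρ) ≠ ∞) :
    ∫⁻ z, steiner g z ∂(volume.prod ρ) = ∫⁻ z, g z ∂(volume.prod ρ) := by
  simpa only [mul_one] using lintegral_steiner_mul_snd hg hfin (measurable_const (a := 1))

theorem lintegral_steiner_mul_sq_add_defect (hg : Measurable g) (hg1 : ∀ z, g z ≤ 1)
    (hfin : ∫⁻ z, g z ∂(volume.prod ρ) ≠ ∞) :
    ∫⁻ z, steiner g z * ENNReal.ofReal (z.1 ^ 2) ∂(volume.prod ρ)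
        + ∫⁻ z, steinerDefect g z ∂(volume.prod ρ)
      = ∫⁻ z, g z * ENNReal.ofReal (z.1 ^ 2) ∂(volume.prod ρ) := by
  rw [← lintegral_add_left (by fun_prop), lintegral_prod_symm _ (by fun_prop),
    lintegral_prod_symm _ (by fun_prop)]
  refine lintegral_congr_ae ?_
  filter_upwards [ae_lintegral_line_ne_top hg hfin] with y hy
  have hmass : ∫⁻ t, g (t, y) * ENNReal.ofReal (halfLength g y ^ 2)
      = ∫⁻ t, steiner g (t, y) * ENNReal.ofReal (halfLength g y ^ 2) := by
    rw [lintegral_mul_const _ (by fun_prop), lintegral_mul_const _ (by fun_prop),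
      lintegral_steiner_line hy]
  have hmass_top : ∫⁻ t, g (t, y) * ENNReal.ofReal (halfLength g y ^ 2) ≠ ∞ := by
    rw [lintegral_mul_const _ (by fun_prop)]
    exact ENNReal.mul_ne_top hy ENNReal.ofReal_ne_top
  refine (ENNReal.add_left_inj hmass_top).1 ?_
  conv_rhs => rw [hmass]
  rw [← lintegral_add_left (by fun_prop), ← lintegral_add_left (by fun_prop)]
  exact lintegral_congr fun t => steiner_mul_sq_add_steinerDefect hg1 t y

theorem measure_prod_setOf_sq_eq_sq {h : Y → ℝ} (hh : Measurable h) :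
    (volume.prod ρ) {z : ℝ × Y | z.1 ^ 2 = h z.2 ^ 2} = 0 := by
  have hS : MeasurableSet {z : ℝ × Y | z.1 ^ 2 = h z.2 ^ 2} :=
    measurableSet_eq_fun (by fun_prop) (by fun_prop)
  rw [Measure.prod_apply_symm hS, lintegral_eq_zero_iff (measurable_measure_prodMk_right hS)]
  refine Eventually.of_forall fun y => measure_mono_null (t := {h y, -h y}) ?_
    ((toFinite _).measure_zero _)
  exact fun t ht => sq_eq_sq_iff_eq_or_eq_neg.1 ht

theorem ae_eq_steiner_of_lintegral_defect_eq_zero (hg : Measurable g) (hg1 : ∀ z, g z ≤ 1)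
    (hD : ∫⁻ z, steinerDefect g z ∂(volume.prod ρ) = 0) : g =ᵐ[volume.prod ρ] steiner g := by
  rw [lintegral_eq_zero_iff (measurable_steinerDefect hg)] at hD
  have hboundary : ∀ᵐ z ∂(volume.prod ρ), ¬ z.1 ^ 2 = halfLength g z.2 ^ 2 :=
    measure_eq_zero_iff_ae_notMem.1 (measure_prod_setOf_sq_eq_sq (measurable_halfLength hg))
  filter_upwards [hD, hboundary] with z hz hzb
  have hprod : |z.1 ^ 2 - halfLength g z.2 ^ 2| * |(g z).toReal - (steiner g z).toReal| = 0 :=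
    le_antisymm (ENNReal.ofReal_eq_zero.1 hz) (by positivity)
  have hdiff := (mul_eq_zero.1 hprod).resolve_left (abs_ne_zero.2 (sub_ne_zero.2 hzb))
  exact (ENNReal.toReal_eq_toReal_iff' (ne_top_of_le_ne_top ENNReal.one_ne_top (hg1 _))
    (ne_top_of_le_ne_top ENNReal.one_ne_top (steiner_le_one g z))).1
      (sub_eq_zero.1 (abs_eq_zero.1 hdiff))

end Steiner

section TupleIntegral

variable {E : Type*} [NormedAddCommGroup E] [InnerProductSpace ℝ E] {k : ℕ}

open scoped RealInnerProductSpace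

/-- Steiner convexity of a function of `k` points (Rogers–Shephard, Paouris–Pivovarov): it is
convex under simultaneous motion of the points along a direction `w`, and even when the points start
on the hyperplane orthogonal to `w`. -/
structure SteinerConvex (F : (Fin k → E) → ℝ) : Prop where
  continuous : Continuous F
  nonneg : ∀ x, 0 ≤ F x
  convexOn : ∀ (w : E) (y : Fin k → E),
    ConvexOn ℝ univ fun t : Fin k → ℝ => F fun i => t i • w + y i
  even : ∀ (w : E) (y : Fin k → E), (∀ i, ⟪w, y i⟫ = 0) → ∀ t : Fin k → ℝ,
    F (fun i => (-t) i • w + y i) = F fun i => t i • w + y i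

variable [MeasurableSpace E]

/-- The integral of `F` over `k` independent points with common law `μ`. -/
def tupleIntegral (F : (Fin k → E) → ℝ) (μ : Measure E) : ℝ≥0∞ :=
  ∫⁻ x, ENNReal.ofReal (F x) ∂Measure.pi fun _ => μ

/-- The second moment of `μ` about the origin. -/
def secondMoment (μ : Measure E) : ℝ≥0∞ :=
  ∫⁻ x, ENNReal.ofReal (‖x‖ ^ 2) ∂μ

variable [FiniteDimensional ℝ E] [BorelSpace E]

theorem tupleIntegral_withDensity {F : (Fin k → E) → ℝ} (hF : Measurable F) {g : E → ℝ≥0∞}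
    (hg : Measurable g) (hg1 : ∀ x, g x ≤ 1) :
    tupleIntegral F (volume.withDensity g) = ∫⁻ x, (∏ i, g (x i)) * ENNReal.ofReal (F x) := by
  have := sigmaFinite_withDensity_of_le_one (μ := (volume : Measure E)) hg1
  exact lintegral_pi_withDensity _ (fun _ => hg) hF.ennreal_ofReal

theorem secondMoment_withDensity {g : E → ℝ≥0∞} (hg : Measurable g) :
    secondMoment (volume.withDensity g) = ∫⁻ x, g x * ENNReal.ofReal (‖x‖ ^ 2) :=
  lintegral_withDensity_eq_lintegral_mul _ hg (by fun_prop)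

/-- Cartesian coordinates `(t, y) ↦ t e + y` along the line spanned by the unit vector `e` and on
its orthogonal complement. -/
def lineCoord (e : E) (he : ‖e‖ = 1) : ℝ × (ℝ ∙ e)ᗮ ≃ᵐ E :=
  (MeasurableEquiv.toLp 2 (ℝ × (ℝ ∙ e)ᗮ)).trans
    ((LinearIsometryEquiv.withLpProdCongr 2 (LinearIsometryEquiv.toSpanUnitSingleton e he)
      (LinearIsometryEquiv.refl ℝ (ℝ ∙ e)ᗮ)).trans
        (ℝ ∙ e).orthogonalDecomposition.symm).toHomeomorph.toMeasurableEquiv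

variable {e : E} (he : ‖e‖ = 1)

theorem lineCoord_apply (z : ℝ × (ℝ ∙ e)ᗮ) : lineCoord e he z = z.1 • e + (z.2 : E) := by
  simp [lineCoord]

theorem norm_lineCoord_sq (z : ℝ × (ℝ ∙ e)ᗮ) : ‖lineCoord e he z‖ ^ 2 = z.1 ^ 2 + ‖z.2‖ ^ 2 := by
  have horth : ⟪z.1 • e, (z.2 : E)⟫ = 0 := by
    rw [real_inner_smul_left, Submodule.mem_orthogonal_singleton_iff_inner_right.1 z.2.2, mul_zero]
  rw [lineCoord_apply, norm_add_sq_real, horth, norm_smul, he, Real.norm_eq_abs, mul_one, sq_abs,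
    mul_zero, add_zero, Submodule.coe_norm]

theorem measurePreserving_lineCoord : MeasurePreserving (lineCoord e he) :=
  (WithLp.volume_preserving_toLp ℝ (ℝ ∙ e)ᗮ).trans (LinearIsometryEquiv.measurePreserving _)

theorem lintegral_pi_eq_lintegral_lineCoord {u : (Fin k → E) → ℝ≥0∞} (hu : Measurable u) :
    ∫⁻ x, u x = ∫⁻ y : Fin k → (ℝ ∙ e)ᗮ, ∫⁻ t : Fin k → ℝ,
      u fun i => lineCoord e he (t i, y i) := by
  have hmp := (volume_preserving_pi fun _ : Fin k => measurePreserving_lineCoord he).comp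
    (volume_measurePreserving_arrowProdEquivProdArrow ℝ (ℝ ∙ e)ᗮ (Fin k)).symm
  rw [← hmp.lintegral_comp hu]
  exact lintegral_prod_symm _ (hu.comp hmp.measurable).aemeasurable

/-- Steiner symmetrization of the density `g` with respect to the hyperplane orthogonal to `e`. -/
def steinerAlong (g : E → ℝ≥0∞) (x : E) : ℝ≥0∞ :=
  steiner (g ∘ lineCoord e he) ((lineCoord e he).symm x)

variable {g : E → ℝ≥0∞}

theorem measurable_comp_lineCoord (hg : Measurable g) : Measurable (g ∘ lineCoord e he) :=
  hg.comp (lineCoord e he).measurable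

theorem measurable_steinerAlong (hg : Measurable g) : Measurable (steinerAlong he g) :=
  (measurable_steiner (measurable_comp_lineCoord he hg)).comp (lineCoord e he).symm.measurable

theorem steinerAlong_le_one (x : E) : steinerAlong he g x ≤ 1 :=
  steiner_le_one _ _

theorem steinerAlong_lineCoord (z : ℝ × (ℝ ∙ e)ᗮ) :
    steinerAlong he g (lineCoord e he z) = steiner (g ∘ lineCoord e he) z := by
  rw [steinerAlong, MeasurableEquiv.symm_apply_apply]

theorem lintegral_eq_lintegral_lineCoord (hg : Measurable g) :
    ∫⁻ x, g x = ∫⁻ z : ℝ × (ℝ ∙ e)ᗮ, g (lineCoord e he z) :=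
  ((measurePreserving_lineCoord he).lintegral_comp hg).symm

theorem lintegral_steinerAlong (hg : Measurable g) (hfin : ∫⁻ x, g x ≠ ∞) :
    ∫⁻ x, steinerAlong he g x = ∫⁻ x, g x := by
  rw [lintegral_eq_lintegral_lineCoord he (measurable_steinerAlong he hg)]
  rw [lintegral_eq_lintegral_lineCoord he hg] at hfin ⊢
  simp only [steinerAlong_lineCoord]
  exact lintegral_steiner (measurable_comp_lineCoord he hg) hfin

theorem secondMoment_eq_lineCoord (hg : Measurable g) :
    secondMoment (volume.withDensity g) =
      (∫⁻ z, g (lineCoord e he z) * ENNReal.ofReal (z.1 ^ 2))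
        + ∫⁻ z, g (lineCoord e he z) * ENNReal.ofReal (‖z.2‖ ^ 2) := by
  rw [secondMoment_withDensity hg, lintegral_eq_lintegral_lineCoord he (by fun_prop),
    ← lintegral_add_left (by fun_prop)]
  refine lintegral_congr fun z => ?_
  rw [norm_lineCoord_sq, ENNReal.ofReal_add (sq_nonneg _) (sq_nonneg _), mul_add]

theorem ae_eq_steinerAlong_of_secondMoment_le (hg : Measurable g) (hg1 : ∀ x, g x ≤ 1)
    (hfin : ∫⁻ x, g x ≠ ∞) (hmom : secondMoment (volume.withDensity g) ≠ ∞)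
    (hle : secondMoment (volume.withDensity g) ≤
      secondMoment (volume.withDensity (steinerAlong he g))) :
    g =ᵐ[volume] steinerAlong he g := by
  have hgm := measurable_comp_lineCoord he hg
  rw [lintegral_eq_lintegral_lineCoord he hg] at hfin
  rw [secondMoment_eq_lineCoord he hg] at hmom hle
  rw [secondMoment_eq_lineCoord he (measurable_steinerAlong he hg)] at hle
  simp only [steinerAlong_lineCoord] at hle
  obtain ⟨hsq, hperp⟩ := ENNReal.add_ne_top.1 hmom
  have hsnd := lintegral_steiner_mul_snd (N := fun y : (ℝ ∙ e)ᗮ => ENNReal.ofReal (‖y‖ ^ 2)) hgm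
    hfin (by fun_prop)
  have hdefect := lintegral_steiner_mul_sq_add_defect hgm (fun z => hg1 _) hfin
  have hzero : ∫⁻ z, steinerDefect (g ∘ lineCoord e he) z = 0 := by
    rw [← Measure.volume_eq_prod] at hsnd hdefect
    simp only [Function.comp_apply] at hsnd hdefect
    rw [hsnd, ENNReal.add_le_add_iff_right hperp, ← hdefect] at hle
    rw [← hdefect, ENNReal.add_ne_top] at hsq
    simpa using (ENNReal.add_le_add_iff_left (b := ∫⁻ z, steinerDefect (g ∘ lineCoord e he) z)
      (c := 0) hsq.1).1 (by simpa using hle)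
  have hae := ae_eq_steiner_of_lintegral_defect_eq_zero hgm (fun z => hg1 _) hzero
  filter_upwards [(measurePreserving_lineCoord he).symm.quasiMeasurePreserving.ae hae] with x hx
  simpa [steinerAlong] using hx

theorem steinerAlong_sub_smul_eq_one {x : E} {s : ℝ} (hs : ‖x - s • e‖ ≤ ‖x‖)
    (hx : steinerAlong he g x ≠ 0) : steinerAlong he g (x - s • e) = 1 := by
  obtain ⟨⟨t, y⟩, rfl⟩ := (lineCoord e he).surjective x
  have hsub : lineCoord e he (t, y) - s • e = lineCoord e he (t - s, y) := by
    simp only [lineCoord_apply, sub_smul]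
    abel
  have habs : |t - s| ≤ |t| := by
    rw [hsub] at hs
    have hsq := pow_le_pow_left₀ (norm_nonneg _) hs 2
    rw [norm_lineCoord_sq, norm_lineCoord_sq] at hsq
    exact sq_le_sq.1 (by linarith)
  rw [steinerAlong_lineCoord] at hx
  rw [hsub, steinerAlong_lineCoord]
  simp only [steiner] at hx ⊢
  have ht := abs_le.2 (mem_Icc.1 (mem_of_indicator_ne_zero hx))
  exact indicator_of_mem (mem_Icc.2 (abs_le.1 (habs.trans ht))) _

theorem lintegral_prod_indicator_Icc_le {φ : (Fin k → ℝ) → ℝ} (hφ : ConvexOn ℝ univ φ)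
    (hφ0 : ∀ x, 0 ≤ φ x) (heven : ∀ x, φ (-x) = φ x) {q : Fin k → ℝ → ℝ≥0∞}
    (hq : ∀ i, Measurable (q i)) (hq1 : ∀ i t, q i t ≤ 1) (hmass : ∀ i, ∫⁻ t, q i t ≠ ∞)
    (hmom : ∀ i, ∫⁻ t, q i t * ENNReal.ofReal (t ^ 2) ≠ ∞) :
    ∫⁻ t, (∏ i, (Icc (-((∫⁻ s, q i s).toReal / 2)) ((∫⁻ s, q i s).toReal / 2)).indicator 1 (t i))
        * ENNReal.ofReal (φ t) ≤
      ∫⁻ t, (∏ i, q i (t i)) * ENNReal.ofReal (φ t) := by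
  have hφm := (continuous_of_convexOn_univ hφ).measurable.ennreal_ofReal
  have hfin (i) : IsFiniteMeasure (volume.withDensity (q i)) :=
    isFiniteMeasure_withDensity (hmass i)
  have hint (i) : Integrable (fun t => t) (volume.withDensity (q i)) := by
    refine ((memLp_two_iff_integrable_sq aestronglyMeasurable_id).2
      ⟨by fun_prop, ?_⟩).integrable one_le_two
    simp only [id_eq]
    rw [hasFiniteIntegral_iff_ofReal (Eventually.of_forall fun t => sq_nonneg t),
      lintegral_withDensity_eq_lintegral_mul _ (hq i) (by fun_prop)]
    exact (hmom i).lt_top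
  have hcentred := lintegral_pi_centred_Icc_le hφ hφ0 heven
    (fun i => withDensity_le_self_of_le_one (hq1 i)) hint
  have hreal (i) : (volume.withDensity (q i)).real univ = (∫⁻ s, q i s).toReal := by
    rw [measureReal_def, withDensity_apply _ MeasurableSet.univ, setLIntegral_univ]
  simp only [hreal, ← withDensity_indicator_one measurableSet_Icc] at hcentred
  have hfinIcc (i) : SigmaFinite ((volume : Measure ℝ).withDensity
      ((Icc (-((∫⁻ s, q i s).toReal / 2)) ((∫⁻ s, q i s).toReal / 2)).indicator 1)) := by
    rw [withDensity_indicator_one measurableSet_Icc]; infer_instance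
  rwa [lintegral_pi_withDensity _ hq hφm,
    lintegral_pi_withDensity _ (fun i => measurable_one.indicator measurableSet_Icc) hφm]
    at hcentred

theorem tupleIntegral_steinerAlong_le {F : (Fin k → E) → ℝ} (hF : SteinerConvex F)
    (hg : Measurable g) (hg1 : ∀ x, g x ≤ 1) (hfin : ∫⁻ x, g x ≠ ∞)
    (hmom : secondMoment (volume.withDensity g) ≠ ∞) :
    tupleIntegral F (volume.withDensity (steinerAlong he g)) ≤
      tupleIntegral F (volume.withDensity g) := by
  have hFm := hF.continuous.measurable
  have hgm := measurable_comp_lineCoord he hg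
  have hsm := measurable_steinerAlong he hg
  rw [tupleIntegral_withDensity hFm hsm (steinerAlong_le_one he),
    tupleIntegral_withDensity hFm hg hg1, lintegral_pi_eq_lintegral_lineCoord he (by fun_prop),
    lintegral_pi_eq_lintegral_lineCoord he (by fun_prop)]
  refine lintegral_mono_ae ?_
  rw [lintegral_eq_lintegral_lineCoord he hg] at hfin
  rw [secondMoment_eq_lineCoord he hg, ENNReal.add_ne_top] at hmom
  have hline := (ae_lintegral_line_ne_top hgm hfin).and
    (ae_lintegral_line_ne_top (hgm.mul (by fun_prop)) hmom.1)
  have hlines : ∀ᵐ y : Fin k → (ℝ ∙ e)ᗮ, ∀ i, ∫⁻ t, g (lineCoord e he (t, y i)) ≠ ∞ ∧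
      ∫⁻ t, g (lineCoord e he (t, y i)) * ENNReal.ofReal (t ^ 2) ≠ ∞ :=
    ae_all_iff.2 fun i => (Measure.quasiMeasurePreserving_eval
      (fun _ : Fin k => (volume : Measure (ℝ ∙ e)ᗮ)) i).ae hline
  filter_upwards [hlines] with y hy
  simp only [steinerAlong_lineCoord]
  simp only [lineCoord_apply]
  refine lintegral_prod_indicator_Icc_le (hF.convexOn e _) (fun _ => hF.nonneg _)
    (hF.even e _ fun i => Submodule.mem_orthogonal_singleton_iff_inner_right.1 (y i).2)
    (q := fun i t => g (t • e + y i)) (fun i => by fun_prop) (fun i t => hg1 _) ?_ ?_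
  · simpa only [lineCoord_apply] using fun i => (hy i).1
  · simpa only [lineCoord_apply] using fun i => (hy i).2

end TupleIntegral

section Compactness

open scoped NNReal

variable {X : Type*} [TopologicalSpace X] [MeasurableSpace X]

theorem lowerSemicontinuous_lintegral_probabilityMeasure [OpensMeasurableSpace X] {h : X → ℝ≥0}
    (hh : Continuous h) :
    LowerSemicontinuous fun μ : ProbabilityMeasure X => ∫⁻ x, h x ∂(μ : Measure X) := by
  have hsup (μ : ProbabilityMeasure X) :
      ∫⁻ x, h x ∂(μ : Measure X) = ⨆ N : ℕ, ∫⁻ x, (min (h x) N : ℝ≥0) ∂(μ : Measure X) := by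
    rw [← lintegral_iSup (fun N => by fun_prop) fun M N hMN x => by dsimp only; gcongr]
    refine lintegral_congr fun x =>
      le_antisymm ?_ (iSup_le fun N => by gcongr; exact min_le_left _ _)
    obtain ⟨N, hN⟩ := exists_nat_ge (h x)
    exact le_iSup_of_le N (by rw [min_eq_left hN])
  simp_rw [hsup]
  refine lowerSemicontinuous_iSup fun N => Continuous.lowerSemicontinuous ?_
  let truncation := BoundedContinuousFunction.ofNormedAddCommGroup
    (fun x => ((min (h x) N : ℝ≥0) : ℝ)) (by fun_prop) N fun x => by
      rw [NNReal.norm_eq]; exact_mod_cast min_le_right _ _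
  have htrunc (x : X) : truncation.nnrealPart x = min (h x) N := Real.toNNReal_coe
  simpa only [htrunc] using
    ProbabilityMeasure.continuous_lintegral_boundedContinuousFunction truncation.nnrealPart

theorem isClosed_setOf_probabilityMeasure_le [OpensMeasurableSpace X] [HasOuterApproxClosed X]
    (ν : Measure X) [ν.OuterRegular] :
    IsClosed {μ : ProbabilityMeasure X | (μ : Measure X) ≤ ν} := by
  have hopen : {μ : ProbabilityMeasure X | (μ : Measure X) ≤ ν} =
      ⋂ U : {U : Set X // IsOpen U}, {μ : ProbabilityMeasure X | (μ : Measure X) U ≤ ν U} := by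
    ext μ
    refine ⟨fun h => mem_iInter.2 fun U => h U, fun h => Measure.le_iff.2 fun s _ => ?_⟩
    rw [s.measure_eq_iInf_isOpen ν]
    exact le_iInf₂ fun U hsU => le_iInf fun hU =>
      (measure_mono hsU).trans (mem_iInter.1 h ⟨U, hU⟩)
  rw [hopen]
  refine isClosed_iInter fun U => LowerSemicontinuous.isClosed_preimage
    (f := fun μ : ProbabilityMeasure X => (μ : Measure X) U)
    (lowerSemicontinuous_iff_le_liminf.2 fun μ => ?_) _
  exact ProbabilityMeasure.le_liminf_measure_open_of_tendsto tendsto_id U.2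

theorem exists_withDensity_eq_of_le {α : Type*} [MeasurableSpace α] {μ ν : Measure α}
    [SFinite μ] [SigmaFinite ν] (h : μ ≤ ν) :
    ∃ g : α → ℝ≥0∞, Measurable g ∧ (∀ x, g x ≤ 1) ∧ ν.withDensity g = μ := by
  refine ⟨fun x => min (μ.rnDeriv ν x) 1, by fun_prop, fun x => min_le_right _ _, ?_⟩
  conv_rhs => rw [← Measure.withDensity_rnDeriv_eq μ ν (Measure.absolutelyContinuous_of_le h)]
  refine withDensity_congr_ae ?_
  filter_upwards [Measure.rnDeriv_le_one_of_le h] with x hx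
  exact min_eq_left hx

theorem tupleIntegral_smul {α : Type*} [MeasurableSpace α] {k : ℕ} (F : (Fin k → α) → ℝ) {c : ℝ≥0∞}
    (hc : c ≠ ∞) (μ : Measure α) [SigmaFinite μ] :
    tupleIntegral F (c • μ) = c ^ k * tupleIntegral F μ := by
  lift c to NNReal using hc
  have hpi : (Measure.pi fun _ : Fin k => (c : ℝ≥0∞) • μ) =
      (c : ℝ≥0∞) ^ k • Measure.pi fun _ => μ := by
    have : SigmaFinite ((c : ℝ≥0∞) • μ) := inferInstanceAs (SigmaFinite (c • μ))
    refine Measure.pi_eq fun s _ => ?_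
    simp [Finset.prod_mul_distrib]
  rw [tupleIntegral, hpi, lintegral_smul_measure, smul_eq_mul, tupleIntegral]

variable {E : Type*} [NormedAddCommGroup E] [MeasurableSpace E]

theorem secondMoment_smul (c : ℝ≥0∞) (μ : Measure E) : secondMoment (c • μ) = c * secondMoment μ :=
  lintegral_smul_measure _ _

variable [BorelSpace E]

theorem lowerSemicontinuous_secondMoment :
    LowerSemicontinuous fun μ : ProbabilityMeasure E => secondMoment (μ : Measure E) :=
  lowerSemicontinuous_lintegral_probabilityMeasure (h := fun x : E => Real.toNNReal (‖x‖ ^ 2))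
    (by fun_prop)

theorem measure_compl_closedBall_le_secondMoment_div (μ : Measure E) {r : ℝ} (hr : 1 ≤ r) :
    μ (Metric.closedBall 0 r)ᶜ ≤ secondMoment μ / ENNReal.ofReal r := by
  have hr0 : 0 < r := by linarith
  rw [ENNReal.le_div_iff_mul_le (by simp [hr0]) (by simp), mul_comm]
  refine le_trans ?_ (mul_meas_ge_le_lintegral (f := fun x : E => ENNReal.ofReal (‖x‖ ^ 2))
    (by fun_prop) (ENNReal.ofReal r))
  gcongr
  intro x hx
  have hx : r < ‖x‖ := by simpa using hx
  exact ENNReal.ofReal_le_ofReal (by nlinarith)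

variable [InnerProductSpace ℝ E] [FiniteDimensional ℝ E]

theorem lowerSemicontinuous_tupleIntegral {k : ℕ} {F : (Fin k → E) → ℝ} (hF : Continuous F) :
    LowerSemicontinuous fun μ : ProbabilityMeasure E => tupleIntegral F (μ : Measure E) :=
  (lowerSemicontinuous_lintegral_probabilityMeasure (continuous_real_toNNReal.comp hF)).comp
    (show Continuous fun μ : ProbabilityMeasure E => ProbabilityMeasure.pi fun _ : Fin k => μ by
      fun_prop)

theorem isCompact_setOf_secondMoment_le (M : ℝ≥0) :
    IsCompact {μ : ProbabilityMeasure E | secondMoment (μ : Measure E) ≤ M} := by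
  have hlim : Tendsto (fun n : ℕ => M / ((n : ℝ≥0) + 1)) atTop (𝓝 0) := by
    rw [← NNReal.tendsto_coe]
    simpa using (tendsto_add_atTop_iff_nat 1).2 (tendsto_const_div_atTop_nhds_zero_nat (M : ℝ))
  refine (isCompact_setOfPred_probabilityMeasure_mass_eq_compl_isCompact_le (E := E) hlim
    (fun n => isCompact_closedBall 0 ((n : ℝ) + 1)) (Or.inl inferInstance)).of_isClosed_subset
    (lowerSemicontinuous_secondMoment.isClosed_preimage _) fun μ hμ n => ?_
  rw [← ENNReal.coe_le_coe, ProbabilityMeasure.ennreal_coeFn_eq_coeFn_toMeasure,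
    ENNReal.coe_div (by positivity)]
  refine (measure_compl_closedBall_le_secondMoment_div _ (by simp)).trans
    (ENNReal.div_le_div hμ ?_)
  rw [ENNReal.ofReal_add (by positivity) zero_le_one]
  simp

theorem exists_forall_secondMoment_le {S : Set (ProbabilityMeasure E)} (hS : IsClosed S)
    {μ₀ : ProbabilityMeasure E} (hμ₀ : μ₀ ∈ S) (hmom : secondMoment (μ₀ : Measure E) ≠ ∞) :
    ∃ μ ∈ S, ∀ μ' ∈ S, secondMoment (μ : Measure E) ≤ secondMoment (μ' : Measure E) := by
  lift secondMoment (μ₀ : Measure E) to ℝ≥0 using hmom with M hM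
  obtain ⟨μ, hμ, hmin⟩ := LowerSemicontinuousOn.exists_isMinOn
    (s := S ∩ {μ | secondMoment (μ : Measure E) ≤ M}) ⟨μ₀, hμ₀, hM.ge⟩
    ((isCompact_setOf_secondMoment_le M).inter_left hS)
    (lowerSemicontinuous_secondMoment.lowerSemicontinuousOn _)
  refine ⟨μ, hμ.1, fun μ' hμ' => ?_⟩
  by_cases hM' : secondMoment (μ' : Measure E) ≤ M
  · exact hmin ⟨hμ', hM'⟩
  · exact hμ.2.trans (not_le.1 hM').le

theorem exists_le_volume_forall_secondMoment_le {k : ℕ} {F : (Fin k → E) → ℝ} (hF : Continuous F)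
    {μ₀ : Measure E} (hμ₀ : μ₀ ≤ volume) (hpos : μ₀ univ ≠ 0) (hfin : μ₀ univ ≠ ∞)
    (hmom : secondMoment μ₀ ≠ ∞) :
    ∃ μ ≤ volume, μ univ = μ₀ univ ∧ tupleIntegral F μ ≤ tupleIntegral F μ₀ ∧
      ∀ μ' ≤ volume, μ' univ = μ₀ univ → tupleIntegral F μ' ≤ tupleIntegral F μ₀ →
        secondMoment μ ≤ secondMoment μ' := by
  set V := μ₀ univ
  have hinv : V⁻¹ ≠ ∞ := ENNReal.inv_ne_top.2 hpos
  have hcancel : V * V⁻¹ = 1 := ENNReal.mul_inv_cancel hpos hfin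
  have : (V⁻¹ • volume : Measure E).OuterRegular := Measure.OuterRegular.smul _ hinv
  let S : Set (ProbabilityMeasure E) := {P | (P : Measure E) ≤ V⁻¹ • volume} ∩
    {P | tupleIntegral F (P : Measure E) ≤ V⁻¹ ^ k * tupleIntegral F μ₀}
  have hS : IsClosed S := (isClosed_setOf_probabilityMeasure_le _).inter
    ((lowerSemicontinuous_tupleIntegral hF).isClosed_preimage _)
  have hnormalized (μ : Measure E) (hμ : μ ≤ volume) (hmass : μ univ = V)
      (hJ : tupleIntegral F μ ≤ tupleIntegral F μ₀) :
      ∃ P ∈ S, (P : Measure E) = V⁻¹ • μ := by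
    have : IsFiniteMeasure μ := ⟨by rw [hmass]; exact hfin.lt_top⟩
    have hprob : IsProbabilityMeasure (V⁻¹ • μ) :=
      ⟨by rw [Measure.smul_apply, hmass, smul_eq_mul, ENNReal.inv_mul_cancel hpos hfin]⟩
    have hdom : V⁻¹ • μ ≤ V⁻¹ • volume := by gcongr
    have hJ' : tupleIntegral F (V⁻¹ • μ) ≤ V⁻¹ ^ k * tupleIntegral F μ₀ := by
      rw [tupleIntegral_smul F hinv]
      gcongr
    exact ⟨⟨V⁻¹ • μ, hprob⟩, ⟨hdom, hJ'⟩, rfl⟩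
  obtain ⟨P₀, hP₀, hP₀_eq⟩ := hnormalized μ₀ hμ₀ rfl le_rfl
  obtain ⟨P, ⟨hP, hJ⟩, hmin⟩ := exists_forall_secondMoment_le hS hP₀
    (by rw [hP₀_eq, secondMoment_smul]; exact ENNReal.mul_ne_top hinv hmom)
  refine ⟨V • (P : Measure E), ?_, by simp, ?_, fun μ' hμ' hmass' hJ' => ?_⟩
  · calc V • (P : Measure E) ≤ V • V⁻¹ • volume := by gcongr; exact hP
      _ = volume := by rw [smul_smul, hcancel, one_smul]
  · calc tupleIntegral F (V • (P : Measure E)) = V ^ k * tupleIntegral F (P : Measure E) :=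
        tupleIntegral_smul F hfin _
      _ ≤ V ^ k * (V⁻¹ ^ k * tupleIntegral F μ₀) := by gcongr; exact hJ
      _ = tupleIntegral F μ₀ := by rw [← mul_assoc, ← mul_pow, hcancel, one_pow, one_mul]
  · obtain ⟨P', hP', hP'_eq⟩ := hnormalized μ' hμ' hmass' hJ'
    calc secondMoment (V • (P : Measure E)) = V * secondMoment (P : Measure E) :=
        secondMoment_smul _ _
      _ ≤ V * secondMoment (V⁻¹ • μ') := by gcongr; exact hP'_eq ▸ hmin P' hP'
      _ = secondMoment μ' := by rw [secondMoment_smul, ← mul_assoc, hcancel, one_mul]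

end Compactness

section Rigidity

variable {G : Type*} [AddCommGroup G] [MeasurableSpace G] [MeasurableAdd₂ G] [MeasurableNeg G]
  {μ : Measure G} [SFinite μ] [μ.IsAddLeftInvariant] [μ.IsNegInvariant] {g : G → ℝ≥0∞} {B : Set G}

theorem lintegral_compl_mul_lintegral_one_sub_eq_zero (hg : Measurable g) (hB : MeasurableSet B)
    (h : ∀ w, ∀ᵐ x ∂μ, x ∉ B → x - w ∈ B → g x ≠ 0 → g (x - w) = 1) :
    (∫⁻ x in Bᶜ, g x ∂μ) * ∫⁻ x in B, 1 - g x ∂μ = 0 := by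
  rw [← lintegral_indicator hB.compl, ← lintegral_indicator hB]
  have hout : Measurable (Bᶜ.indicator g) := hg.indicator hB.compl
  have : Measurable (B.indicator fun x => 1 - g x) := (measurable_const.sub hg).indicator hB
  have hfubini : (∫⁻ x, Bᶜ.indicator g x ∂μ) * ∫⁻ x, B.indicator (fun x => 1 - g x) x ∂μ =
      ∫⁻ w, ∫⁻ x, Bᶜ.indicator g x * B.indicator (fun x => 1 - g x) (x - w) ∂μ ∂μ := by
    rw [← lintegral_mul_const _ hout, ← lintegral_lintegral_swap (by fun_prop)]
    refine lintegral_congr fun x => ?_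
    rw [lintegral_const_mul _ (by fun_prop), lintegral_sub_left_eq_self]
  rw [hfubini]
  refine lintegral_eq_zero_of_ae_eq_zero (Eventually.of_forall fun w => ?_)
  refine lintegral_eq_zero_of_ae_eq_zero ((h w).mono fun x hx => ?_)
  by_contra hne
  obtain ⟨hx_out, hx_in⟩ := mul_ne_zero_iff.1 hne
  have hxB := mem_of_indicator_ne_zero hx_out
  have hxwB := mem_of_indicator_ne_zero hx_in
  rw [indicator_of_mem hxB] at hx_out
  rw [indicator_of_mem hxwB, hx hxB hxwB hx_out, tsub_self] at hx_in
  exact hx_in rfl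

theorem ae_eq_indicator_of_forall_ae_translate (hg : Measurable g) (hg1 : ∀ x, g x ≤ 1)
    (hB : MeasurableSet B) (hBfin : μ B ≠ ∞) (hmass : ∫⁻ x, g x ∂μ = μ B)
    (h : ∀ w, ∀ᵐ x ∂μ, x ∉ B → x - w ∈ B → g x ≠ 0 → g (x - w) = 1) :
    g =ᵐ[μ] B.indicator 1 := by
  have houtside : (∫⁻ x in B, g x ∂μ) + ∫⁻ x in Bᶜ, g x ∂μ = μ B := by
    rw [lintegral_add_compl _ hB, hmass]
  have hinside : (∫⁻ x in B, g x ∂μ) + ∫⁻ x in B, 1 - g x ∂μ = μ B := by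
    rw [← lintegral_add_left hg, ← setLIntegral_one]
    exact lintegral_congr fun x => add_tsub_cancel_of_le (hg1 x)
  have hBg : ∫⁻ x in B, g x ∂μ ≠ ∞ :=
    ne_top_of_le_ne_top hBfin (houtside ▸ le_self_add)
  have heq := (ENNReal.add_right_inj hBg).1 (houtside.trans hinside.symm)
  have hzero := lintegral_compl_mul_lintegral_one_sub_eq_zero hg hB h
  rw [← heq, mul_self_eq_zero] at hzero
  have hout := (lintegral_eq_zero_iff hg).1 hzero
  have hin := (lintegral_eq_zero_iff (measurable_const.sub hg)).1 (heq ▸ hzero)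
  filter_upwards [(ae_restrict_iff' hB.compl).1 hout, (ae_restrict_iff' hB).1 hin]
    with x hx_out hx_in
  by_cases hx : x ∈ B
  · rw [indicator_of_mem hx]
    exact le_antisymm (hg1 x) (tsub_eq_zero_iff_le.1 (hx_in hx))
  · rw [indicator_of_notMem hx]
    exact hx_out hx

end Rigidity

section BallMinimizes

variable {E : Type*} [NormedAddCommGroup E] [InnerProductSpace ℝ E] [FiniteDimensional ℝ E]
  [MeasurableSpace E] [BorelSpace E] {k : ℕ} {F : (Fin k → E) → ℝ}

theorem tupleIntegral_restrict_le {α : Type*} [MeasurableSpace α] (F : (Fin k → α) → ℝ)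
    (μ : Measure α) [SigmaFinite μ] (s : Set α) :
    tupleIntegral F (μ.restrict s) ≤ tupleIntegral F μ := by
  rw [tupleIntegral, ← Measure.restrict_pi_pi]
  exact setLIntegral_le_lintegral _ _

/- A minimizer of the second moment is invariant under Steiner symmetrization in every direction. -/
theorem ae_translate_of_forall_secondMoment_le (hF : SteinerConvex F) {g : E → ℝ≥0∞}
    (hg : Measurable g) (hg1 : ∀ x, g x ≤ 1) (hfin : ∫⁻ x, g x ≠ ∞)
    (hmom : secondMoment (volume.withDensity g) ≠ ∞)
    (hmin : ∀ μ ≤ volume, μ univ = ∫⁻ x, g x →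
      tupleIntegral F μ ≤ tupleIntegral F (volume.withDensity g) →
      secondMoment (volume.withDensity g) ≤ secondMoment μ) (w : E) :
    ∀ᵐ x, ‖x - w‖ < ‖x‖ → g x ≠ 0 → g (x - w) = 1 := by
  rcases eq_or_ne w 0 with rfl | hw
  · simp
  have he : ‖‖w‖⁻¹ • w‖ = 1 := by simp [norm_smul, hw]
  have hwe : ‖w‖ • ‖w‖⁻¹ • w = w := smul_inv_smul₀ (norm_ne_zero_iff.2 hw) w
  have hsteiner : g =ᵐ[volume] steinerAlong he g := by
    refine ae_eq_steinerAlong_of_secondMoment_le he hg hg1 hfin hmom (hmin _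
      (withDensity_le_self_of_le_one (steinerAlong_le_one he)) ?_
      (tupleIntegral_steinerAlong_le he hF hg hg1 hfin hmom))
    rw [withDensity_apply _ MeasurableSet.univ, Measure.restrict_univ,
      lintegral_steinerAlong he hg hfin]
  filter_upwards [hsteiner,
    (measurePreserving_sub_right volume w).quasiMeasurePreserving.ae hsteiner]
    with x hx hxw hnorm hx0
  have := steinerAlong_sub_smul_eq_one (g := g) he (x := x) (s := ‖w‖)
  rw [hwe, ← hx, ← hxw] at this
  exact this hnorm.le hx0

theorem tupleIntegral_restrict_closedBall_le (hF : SteinerConvex F) {R : ℝ} (hR : 0 < R)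
    {μ₀ : Measure E} (hμ₀ : μ₀ ≤ volume) (hmass : μ₀ univ = volume (Metric.closedBall (0 : E) R))
    (hmom : secondMoment μ₀ ≠ ∞) :
    tupleIntegral F (volume.restrict (Metric.closedBall 0 R)) ≤ tupleIntegral F μ₀ := by
  have hball : volume (Metric.closedBall (0 : E) R) ≠ ∞ := measure_closedBall_lt_top.ne
  obtain ⟨μ, hμ, hμmass, hμJ, hmin⟩ := exists_le_volume_forall_secondMoment_le hF.continuous hμ₀
    (hmass ▸ (Metric.measure_closedBall_pos _ _ hR).ne') (hmass ▸ hball) hmom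
  have : IsFiniteMeasure μ := ⟨by rw [hμmass, hmass]; exact hball.lt_top⟩
  obtain ⟨g, hg, hg1, rfl⟩ := exists_withDensity_eq_of_le hμ
  have hgmass : ∫⁻ x, g x = volume (Metric.closedBall (0 : E) R) := by
    rw [← hmass, ← hμmass, withDensity_apply _ MeasurableSet.univ, Measure.restrict_univ]
  have hgmom := ne_top_of_le_ne_top hmom (hmin μ₀ hμ₀ rfl le_rfl)
  have htranslate := ae_translate_of_forall_secondMoment_le hF hg hg1 (hgmass ▸ hball) hgmom
    fun μ' hμ' hmass' hJ' => hmin μ' hμ' (by rw [hmass', hgmass, hmass]) (hJ'.trans hμJ)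
  have hg_eq : g =ᵐ[volume] (Metric.closedBall 0 R).indicator 1 :=
    ae_eq_indicator_of_forall_ae_translate hg hg1 measurableSet_closedBall hball hgmass fun w =>
      (htranslate w).mono fun x hx hxB hxwB => by
        rw [mem_closedBall_zero_iff] at hxB hxwB
        exact hx (by linarith)
  rwa [withDensity_congr_ae hg_eq, withDensity_indicator_one measurableSet_closedBall] at hμJ

end BallMinimizes

section AlternatingMap

theorem alternatingMap_smul_add {R M N ι : Type*} [CommRing R] [AddCommGroup M] [Module R M]
    [AddCommGroup N] [Module R N] [Fintype ι] [DecidableEq ι] (ω : M [⋀^ι]→ₗ[R] N) (w : M)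
    (y : ι → M) (t : ι → R) :
    ω (fun i => t i • w + y i) = ω y + ω.toMultilinearMap.linearDeriv y fun i => t i • w := by
  have hhigher (s : Finset ι) (hs : 2 ≤ s.card) :
      ω.toMultilinearMap (s.piecewise (fun i => t i • w) y) = 0 := by
    obtain ⟨i, hi, j, hj, hij⟩ := Finset.one_lt_card.1 hs
    have hsmul : s.piecewise (fun i => t i • w) y =
        s.piecewise (fun i => t i • s.piecewise (fun _ => w) y i) (s.piecewise (fun _ => w) y) := by
      ext i
      by_cases hi : i ∈ s <;> simp [hi]
    rw [hsmul, MultilinearMap.map_piecewise_smul]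
    exact smul_eq_zero_of_right _ (ω.map_eq_zero_of_eq _ (by simp [hi, hj]) hij)
  have hexpand := ω.toMultilinearMap.map_add_eq_map_add_linearDeriv_add y fun i => t i • w
  rw [Finset.sum_eq_zero fun s hs => hhigher s (by simpa using hs), add_zero] at hexpand
  rw [← AlternatingMap.coe_multilinearMap, ← hexpand]
  exact congrArg _ (funext fun i => add_comm _ _)

variable {E : Type*} [NormedAddCommGroup E] [InnerProductSpace ℝ E] {k : ℕ}
  (ω : E [⋀^Fin k]→L[ℝ] ℝ)

open scoped RealInnerProductSpace

theorem alternatingMap_eq_zero_of_inner_eq_zero [FiniteDimensional ℝ E]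
    (hE : Module.finrank ℝ E = k) {w : E} (hw : w ≠ 0) {y : Fin k → E}
    (hy : ∀ i, ⟪w, y i⟫ = 0) : ω y = 0 := by
  refine ω.toAlternatingMap.map_linearDependent y fun hlin => hw ?_
  have hspan := hlin.span_eq_top_of_card_eq_finrank' (by simp [hE])
  have hw_orth : w ∈ (Submodule.span ℝ (range y))ᗮ :=
    (Submodule.mem_orthogonal' _ _).2 fun v hv => by
      induction hv using Submodule.span_induction with
      | mem v hv => obtain ⟨i, rfl⟩ := hv; exact hy i
      | zero => exact inner_zero_right w
      | add u v _ _ hu hv => rw [inner_add_right, hu, hv, add_zero]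
      | smul c v _ hv => rw [inner_smul_right, hv, mul_zero]
  rwa [hspan, Submodule.top_orthogonal_eq_bot, Submodule.mem_bot] at hw_orth

theorem steinerConvex_abs_alternatingMap_pow [FiniteDimensional ℝ E]
    (hE : Module.finrank ℝ E = k) (p : ℕ) : SteinerConvex fun x => |ω x| ^ p where
  continuous := by fun_prop
  nonneg x := by positivity
  convexOn w y := by
    let ψ : (Fin k → ℝ) →ᵃ[ℝ] ℝ := AffineMap.const ℝ _ (ω y) +
      (ω.toMultilinearMap.linearDeriv y ∘ₗ
        LinearMap.pi fun i => (LinearMap.proj i).smulRight w).toAffineMap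
    have hψ (t : Fin k → ℝ) : ω (fun i => t i • w + y i) = ψ t :=
      alternatingMap_smul_add ω.toAlternatingMap w y t
    simp only [hψ]
    exact ((convexOn_univ_norm.comp_affineMap ψ).pow (fun t _ => abs_nonneg _) p)
  even w y hy t := by
    rcases eq_or_ne w 0 with rfl | hw
    · simp
    have hlin (t : Fin k → ℝ) : ω (fun i => t i • w + y i) =
        ω.toMultilinearMap.linearDeriv y fun i => t i • w := by
      rw [← zero_add (MultilinearMap.linearDeriv _ _ _),
        ← alternatingMap_eq_zero_of_inner_eq_zero ω hE hw hy]
      exact alternatingMap_smul_add ω.toAlternatingMap w y t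
    have hneg : (fun i => (-t) i • w) = -fun i => t i • w := funext fun i => neg_smul _ _
    rw [hlin, hlin, hneg, map_neg, abs_neg]

end AlternatingMap

section Busemann

variable {E : Type*} [NormedAddCommGroup E] [InnerProductSpace ℝ E] [FiniteDimensional ℝ E]
  [MeasurableSpace E] [BorelSpace E] {k : ℕ}

theorem volume_restrict_closedBall_eq_smul_map {R : ℝ} (hR : 0 < R) :
    (volume : Measure E).restrict (Metric.closedBall 0 R) =
      ENNReal.ofReal (R ^ Module.finrank ℝ E) •
        (volume.restrict (Metric.closedBall (0 : E) 1)).map (R • ·) := by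
  have hpre : (R • · : E → E) ⁻¹' Metric.closedBall 0 R = Metric.closedBall 0 1 := by
    ext x
    simp [norm_smul, abs_of_pos hR, hR]
  rw [← hpre, ← Measure.restrict_map (by fun_prop) measurableSet_closedBall,
    Measure.map_addHaar_smul _ hR.ne', Measure.restrict_smul, smul_smul,
    ← ENNReal.ofReal_mul (by positivity), abs_of_pos (by positivity),
    mul_inv_cancel₀ (by positivity), ENNReal.ofReal_one, one_smul]

theorem tupleIntegral_map {α β : Type*} [MeasurableSpace α] [MeasurableSpace β]
    {F : (Fin k → β) → ℝ} (hF : Measurable F) {φ : α → β} (hφ : Measurable φ) (μ : Measure α)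
    [SigmaFinite (μ.map φ)] :
    tupleIntegral F (μ.map φ) = tupleIntegral (fun x => F (φ ∘ x)) μ := by
  rw [tupleIntegral, ← Measure.pi_map_pi fun _ => hφ.aemeasurable,
    lintegral_map (by fun_prop) (by fun_prop)]
  rfl

theorem tupleIntegral_const_mul {α : Type*} [MeasurableSpace α] {c : ℝ} (hc : 0 ≤ c)
    {F : (Fin k → α) → ℝ} (hF : Measurable F) (μ : Measure α) :
    tupleIntegral (fun x => c * F x) μ = ENNReal.ofReal c * tupleIntegral F μ := by
  simp_rw [tupleIntegral, ENNReal.ofReal_mul hc]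
  exact lintegral_const_mul _ (by fun_prop)

variable (ω : E [⋀^Fin k]→L[ℝ] ℝ)

theorem tupleIntegral_abs_pow_closedBall (hE : Module.finrank ℝ E = k) (p : ℕ) {R : ℝ}
    (hR : 0 < R) :
    tupleIntegral (fun x => |ω x| ^ p) (volume.restrict (Metric.closedBall (0 : E) R)) =
      ENNReal.ofReal (R ^ k) ^ (k + p) *
        tupleIntegral (fun x => |ω x| ^ p) (volume.restrict (Metric.closedBall (0 : E) 1)) := by
  have hF : Measurable fun x => |ω x| ^ p := by fun_prop
  have hhom (x : Fin k → E) : |ω ((R • ·) ∘ x)| ^ p = (R ^ k) ^ p * |ω x| ^ p := by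
    have : ω ((R • ·) ∘ x) = R ^ k * ω x := by
      simpa [Function.comp_def] using ω.toMultilinearMap.map_smul_univ (fun _ => R) x
    rw [this, abs_mul, mul_pow, abs_of_pos (by positivity)]
  have hfinite : IsFiniteMeasure ((volume : Measure E).restrict (Metric.closedBall 0 1)) :=
    isFiniteMeasure_restrict.2 measure_closedBall_lt_top.ne
  rw [volume_restrict_closedBall_eq_smul_map hR, tupleIntegral_smul _ ENNReal.ofReal_ne_top,
    tupleIntegral_map hF (by fun_prop)]
  simp_rw [hhom]
  rw [tupleIntegral_const_mul (by positivity) hF, hE, ← mul_assoc,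
    ENNReal.ofReal_pow (by positivity : 0 ≤ R ^ k), ← pow_add]

theorem busemann_of_secondMoment_ne_top (hE : Module.finrank ℝ E = k) (p : ℕ) (hk : k ≠ 0)
    {μ : Measure E} (hμ : μ ≤ volume) (hfin : μ univ ≠ ∞) (hmom : secondMoment μ ≠ ∞) :
    (μ univ / volume (Metric.closedBall (0 : E) 1)) ^ (k + p) *
        tupleIntegral (fun x => |ω x| ^ p) (volume.restrict (Metric.closedBall (0 : E) 1)) ≤
      tupleIntegral (fun x => |ω x| ^ p) μ := by
  rcases eq_or_ne (μ univ) 0 with h0 | h0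
  · simp [h0, hk]
  have hball0 := (Metric.measure_closedBall_pos (volume : Measure E) 0 one_pos).ne'
  have hball : volume (Metric.closedBall (0 : E) 1) ≠ ∞ := measure_closedBall_lt_top.ne
  set q := μ univ / volume (Metric.closedBall (0 : E) 1)
  have hq : q ≠ ∞ := ENNReal.div_ne_top hfin hball0
  have hq0 : 0 < q.toReal := ENNReal.toReal_pos (ENNReal.div_ne_zero.2 ⟨h0, hball⟩) hq
  obtain ⟨R, hR, hRk⟩ : ∃ R : ℝ, 0 < R ∧ R ^ k = q.toReal :=
    ⟨q.toReal ^ (k⁻¹ : ℝ), by positivity, Real.rpow_inv_natCast_pow hq0.le hk⟩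
  have hRq : ENNReal.ofReal (R ^ k) = q := by rw [hRk, ENNReal.ofReal_toReal hq]
  rw [← hRq, ← tupleIntegral_abs_pow_closedBall ω hE p hR]
  refine tupleIntegral_restrict_closedBall_le (steinerConvex_abs_alternatingMap_pow ω hE p) hR hμ ?_
    hmom
  rw [Measure.addHaar_closedBall' _ _ hR.le, hE, hRq, ENNReal.div_mul_cancel hball0 hball]

theorem busemann (hE : Module.finrank ℝ E = k) (p : ℕ) (hk : k ≠ 0) {μ : Measure E}
    (hμ : μ ≤ volume) :
    (μ univ / volume (Metric.closedBall (0 : E) 1)) ^ (k + p) *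
        tupleIntegral (fun x => |ω x| ^ p) (volume.restrict (Metric.closedBall (0 : E) 1)) ≤
      tupleIntegral (fun x => |ω x| ^ p) μ := by
  have : SigmaFinite μ := Measure.sigmaFinite_of_le _ hμ
  have hexhaust : μ univ = ⨆ n : ℕ, μ (Metric.closedBall 0 n) := by
    rw [← Metric.iUnion_closedBall_nat (0 : E)]
    exact Monotone.measure_iUnion fun m n hmn =>
      Metric.closedBall_subset_closedBall (by exact_mod_cast hmn)
  rw [hexhaust, ENNReal.iSup_div, ENNReal.iSup_pow, ENNReal.iSup_mul]
  refine iSup_le fun n => ?_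
  have hball : μ (Metric.closedBall 0 n) ≠ ∞ :=
    ne_top_of_le_ne_top measure_closedBall_lt_top.ne (hμ _)
  have hmom : secondMoment (μ.restrict (Metric.closedBall 0 n)) ≠ ∞ := by
    refine ne_top_of_le_ne_top
      (ENNReal.mul_ne_top (ENNReal.ofReal_ne_top (r := (n : ℝ) ^ 2)) hball) ?_
    rw [← setLIntegral_const]
    refine setLIntegral_mono measurable_const fun x hx => ?_
    rw [mem_closedBall_zero_iff] at hx
    gcongr
  have := busemann_of_secondMoment_ne_top ω hE p hk (Measure.restrict_le_self.trans hμ)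
    (by rwa [Measure.restrict_apply_univ]) hmom
  rw [Measure.restrict_apply_univ] at this
  exact this.trans (tupleIntegral_restrict_le _ μ _)

end Busemann

section MatrixMeasure

open scoped Matrix

variable {m n : Type*}

instance [Countable m] [Countable n] : SecondCountableTopology (Matrix m n ℝ) :=
  inferInstanceAs (SecondCountableTopology (m → n → ℝ))

variable [Fintype m] [Fintype n]

instance : MeasureSpace (Matrix m n ℝ) :=
  inferInstanceAs (MeasureSpace (m → n → ℝ))

instance : BorelSpace (Matrix m n ℝ) :=
  inferInstanceAs (BorelSpace (m → n → ℝ))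

instance : SigmaFinite (volume : Measure (Matrix m n ℝ)) :=
  inferInstanceAs (SigmaFinite (volume : Measure (m → n → ℝ)))

instance : (volume : Measure (Matrix m n ℝ)).IsOpenPosMeasure :=
  inferInstanceAs (volume : Measure (m → n → ℝ)).IsOpenPosMeasure

instance : (volume : Measure (Matrix m n ℝ)).IsAddLeftInvariant :=
  inferInstanceAs (volume : Measure (m → n → ℝ)).IsAddLeftInvariant

@[fun_prop]
theorem measurable_matrix_mul {l α : Type*} [Fintype l] [MeasurableSpace α] {A : α → Matrix l m ℝ}
    {X : α → Matrix m n ℝ} (hA : Measurable A) (hX : Measurable X) :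
    Measurable fun a => A a * X a :=
  (by fun_prop : Continuous fun p : Matrix l m ℝ × Matrix m n ℝ => p.1 * p.2).measurable.comp
    (hA.prodMk hX)

@[fun_prop]
theorem measurable_matrix_det [DecidableEq m] : Measurable fun A : Matrix m m ℝ => A.det :=
  (Continuous.matrix_det continuous_id).measurable

instance [DecidableEq m] : MeasurableInv (Matrix m m ℝ) where
  measurable_inv := by
    have hadj : Continuous (Matrix.adjugate : Matrix m m ℝ → Matrix m m ℝ) :=
      continuous_id.matrix_adjugate
    simp only [Inv.inv, Ring.inverse_eq_inv']
    exact measurable_pi_iff.2 fun i => measurable_pi_iff.2 fun j =>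
      measurable_matrix_det.inv.mul ((continuous_apply_apply i j).comp hadj).measurable

theorem lintegral_comp_linearMap {E : Type*} [NormedAddCommGroup E] [NormedSpace ℝ E]
    [FiniteDimensional ℝ E] [MeasurableSpace E] [BorelSpace E] (μ : Measure E) [μ.IsAddHaarMeasure]
    {L : E →ₗ[ℝ] E} (hL : LinearMap.det L ≠ 0) {u : E → ℝ≥0∞} (hu : Measurable u) :
    ∫⁻ x, u (L x) ∂μ = ‖LinearMap.det L‖ₑ⁻¹ * ∫⁻ x, u x ∂μ := by
  rw [← lintegral_map hu (LinearMap.continuous_of_finiteDimensional L).measurable,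
    Measure.map_linearMap_addHaar_eq_smul_addHaar μ hL, lintegral_smul_measure, smul_eq_mul,
    ← Real.enorm_eq_ofReal_abs, enorm_inv hL]

theorem lintegral_matrix_comp_linearMap {L : Matrix m n ℝ →ₗ[ℝ] Matrix m n ℝ}
    (hL : LinearMap.det L ≠ 0) {u : Matrix m n ℝ → ℝ≥0∞} (hu : Measurable u) :
    ∫⁻ X, u (L X) = ‖LinearMap.det L‖ₑ⁻¹ * ∫⁻ X, u X :=
  have hpi (T : (m → n → ℝ) →ₗ[ℝ] (m → n → ℝ)) (hT : LinearMap.det T ≠ 0)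
      (v : (m → n → ℝ) → ℝ≥0∞) (hv : Measurable v) :
      ∫⁻ x, v (T x) = ‖LinearMap.det T‖ₑ⁻¹ * ∫⁻ x, v x :=
    lintegral_comp_linearMap volume hT hv
  hpi L hL u hu

theorem det_mulRightLinearMap [DecidableEq n] (B : Matrix n n ℝ) :
    LinearMap.det (mulRightLinearMap m ℝ B) = B.det ^ Fintype.card m := by
  have hpi := LinearMap.det_pi (ι := m) fun _ => Matrix.toLin' Bᵀ
  rw [Finset.prod_const, Finset.card_univ, LinearMap.det_toLin', Matrix.det_transpose] at hpi
  rw [← hpi]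
  congr 1
  refine LinearMap.ext fun X => funext fun i => ?_
  exact (Matrix.mulVec_transpose B (X i)).symm

theorem det_mulLeftLinearMap [DecidableEq m] (A : Matrix m m ℝ) :
    LinearMap.det (mulLeftLinearMap n ℝ A) = A.det ^ Fintype.card n := by
  rw [← Matrix.det_transpose, ← det_mulRightLinearMap,
    ← LinearMap.det_conj (mulLeftLinearMap n ℝ A) (Matrix.transposeLinearEquiv m n ℝ ℝ)]
  congr 1
  ext1 X
  simp [Matrix.transpose_mul]

theorem lintegral_matrix_mul_left [DecidableEq m] {A : Matrix m m ℝ} (hA : A.det ≠ 0)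
    {u : Matrix m n ℝ → ℝ≥0∞} (hu : Measurable u) :
    ∫⁻ X : Matrix m n ℝ, u (A * X) = ‖A.det‖ₑ⁻¹ ^ Fintype.card n * ∫⁻ X, u X := by
  have hdet := det_mulLeftLinearMap (n := n) A
  rw [← ENNReal.inv_pow, ← enorm_pow, ← hdet]
  have hdet_ne : LinearMap.det (mulLeftLinearMap n ℝ A) ≠ 0 :=
    hdet.trans_ne (pow_ne_zero _ hA)
  exact lintegral_matrix_comp_linearMap hdet_ne hu

theorem lintegral_matrix_mul_right [DecidableEq n] {B : Matrix n n ℝ} (hB : B.det ≠ 0)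
    {u : Matrix m n ℝ → ℝ≥0∞} (hu : Measurable u) :
    ∫⁻ X : Matrix m n ℝ, u (X * B) = ‖B.det‖ₑ⁻¹ ^ Fintype.card m * ∫⁻ X, u X := by
  have hdet := det_mulRightLinearMap (m := m) B
  rw [← ENNReal.inv_pow, ← enorm_pow, ← hdet]
  have hdet_ne : LinearMap.det (mulRightLinearMap m ℝ B) ≠ 0 :=
    hdet.trans_ne (pow_ne_zero _ hB)
  exact lintegral_matrix_comp_linearMap hdet_ne hu

theorem measure_eq_zero_of_forall_line {E : Type*} [AddCommGroup E] [Module ℝ E]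
    [MeasurableSpace E] [MeasurableAdd₂ E] [MeasurableSMul ℝ E] {μ : Measure E} [SFinite μ]
    [μ.IsAddLeftInvariant] {N : Set E} (hN : MeasurableSet N) (v : E)
    (hline : ∀ x, volume {t : ℝ | t • v + x ∈ N} = 0) : μ N = 0 := by
  have hmeas : MeasurableSet {z : ℝ × E | z.1 • v + z.2 ∈ N} := by
    refine hN.preimage ?_
    fun_prop
  have hswap : (volume.prod μ) {z : ℝ × E | z.1 • v + z.2 ∈ N} = 0 := by
    rw [Measure.prod_apply_symm hmeas]
    simp [preimage, hline]
  rw [Measure.prod_apply hmeas] at hswap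
  have htranslate (t : ℝ) : μ (Prod.mk t ⁻¹' {z : ℝ × E | z.1 • v + z.2 ∈ N}) = μ N :=
    measure_preimage_add μ (t • v) N
  simpa only [htranslate, lintegral_const, mul_eq_zero, Real.volume_univ, ENNReal.top_ne_zero,
    or_false] using hswap

theorem finite_setOf_det_smul_one_add_eq_zero [DecidableEq n] (A : Matrix n n ℝ) :
    {t : ℝ | (t • 1 + A).det = 0}.Finite := by
  refine ((-A).charpoly.roots.toFinset.finite_toSet).subset fun t ht => ?_
  simpa [(-A).charpoly_monic.ne_zero, Matrix.eval_charpoly, Matrix.smul_one_eq_diagonal] using ht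

theorem ae_det_submatrix_ne_zero [DecidableEq m] (e : m ↪ n) :
    ∀ᵐ X : Matrix m n ℝ, (X.submatrix id e).det ≠ 0 := by
  classical
  have hN : MeasurableSet {X : Matrix m n ℝ | (X.submatrix id e).det = 0} :=
    (isClosed_eq (by fun_prop) continuous_const).measurableSet
  suffices volume {X : Matrix m n ℝ | (X.submatrix id e).det = 0} = 0 by simpa [ae_iff] using this
  refine measure_eq_zero_of_forall_line hN ((1 : Matrix n n ℝ).submatrix e id) fun X => ?_
  refine ((finite_setOf_det_smul_one_add_eq_zero (X.submatrix id e)).subset ?_).measure_zero _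
  intro t ht
  simpa [Matrix.submatrix_add, Matrix.submatrix_smul, Matrix.submatrix_submatrix,
    Matrix.submatrix_one_embedding] using ht

theorem ae_det_ne_zero [DecidableEq n] : ∀ᵐ A : Matrix n n ℝ, A.det ≠ 0 :=
  ae_det_submatrix_ne_zero (Function.Embedding.refl n)

end MatrixMeasure

section GramVolume

open scoped Matrix

variable {m n : Type*} [Fintype m] [Fintype n] [DecidableEq m]

/-- The `m`-dimensional volume of the parallelotope spanned by the rows of `X`. -/
def gramVolume (X : Matrix m n ℝ) : ℝ := √(X * Xᵀ).det

@[fun_prop]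
theorem measurable_gramVolume : Measurable (gramVolume : Matrix m n ℝ → ℝ) := by
  have h : Continuous (gramVolume : Matrix m n ℝ → ℝ) := by unfold gramVolume; fun_prop
  exact h.measurable

theorem gramVolume_mul_left (Y : Matrix m m ℝ) (X : Matrix m n ℝ) :
    gramVolume (Y * X) = |Y.det| * gramVolume X := by
  have hgram : Y * X * (Y * X)ᵀ = Y * (X * Xᵀ) * Yᵀ := by
    simp only [Matrix.transpose_mul, Matrix.mul_assoc]
  have hdet : (Y * X * (Y * X)ᵀ).det = Y.det ^ 2 * (X * Xᵀ).det := by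
    rw [hgram, Matrix.det_mul, Matrix.det_mul, Matrix.det_transpose]
    ring
  rw [gramVolume, hdet, Real.sqrt_mul (sq_nonneg _), Real.sqrt_sq_eq_abs, gramVolume]

theorem gramVolume_eq_one {X : Matrix m n ℝ} (hX : X * Xᵀ = 1) : gramVolume X = 1 := by
  simp [gramVolume, hX]

theorem ae_gramVolume_ne_zero (e : m ↪ n) : ∀ᵐ X : Matrix m n ℝ, gramVolume X ≠ 0 := by
  filter_upwards [ae_det_submatrix_ne_zero e] with X hX hvol
  have hpsd : (X * Xᵀ).PosSemidef := by simpa using Matrix.posSemidef_self_mul_conjTranspose X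
  obtain ⟨v, hv, hvX⟩ := Matrix.exists_vecMul_eq_zero_iff.2
    ((Real.sqrt_eq_zero hpsd.det_nonneg).1 hvol)
  have hvX : v ᵥ* X = 0 := by
    simpa using (Matrix.vecMul_self_mul_conjTranspose_eq_zero X v).1 (by simpa using hvX)
  refine hX (Matrix.exists_vecMul_eq_zero_iff.1 ⟨v, hv, funext fun j => ?_⟩)
  exact congrFun hvX (e j)

end GramVolume

section TopRows

open scoped Matrix

variable {k n : ℕ} (hkn : k ≤ n)

/-- The first `k` rows of a square matrix. For orthogonal `g` they form an orthonormal frame of the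
`k`-dimensional subspace `g⁻¹ H₀ᵏ`. -/
def topRows (g : Matrix (Fin n) (Fin n) ℝ) : Matrix (Fin k) (Fin n) ℝ :=
  g.submatrix (Fin.castLE hkn) id

@[fun_prop]
theorem measurable_topRows : Measurable (topRows hkn) :=
  (continuous_id.matrix_submatrix _ _).measurable

theorem topRows_mul (g h : Matrix (Fin n) (Fin n) ℝ) :
    topRows hkn (g * h) = topRows hkn g * h := rfl

theorem topRows_mul_transpose (g : OG n) :
    topRows hkn g * (topRows hkn g)ᵀ = 1 := by
  have hg : g.1 * g.1ᵀ = 1 := (Matrix.mem_orthogonalGroup_iff _ _).1 g.2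
  exact (congrArg (fun M => M.submatrix (Fin.castLE hkn) (Fin.castLE hkn)) hg).trans
    (Matrix.submatrix_one_embedding (Fin.castLEEmb hkn))

theorem exists_orthonormalBasis_inner_row_eq_zero (hkn : k ≤ n)
    (X : Matrix (Fin k) (Fin n) ℝ) :
    ∃ b : OrthonormalBasis (Fin n) ℝ (Eucl n), ∀ (i : Fin k) (j : Fin n),
      k ≤ j → inner ℝ (b j) (WithLp.toLp 2 (X i)) = 0 := by
  let rows (j : Fin n) : Eucl n := if h : (j : ℕ) < k then WithLp.toLp 2 (X ⟨j, h⟩) else 0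
  refine ⟨InnerProductSpace.gramSchmidtOrthonormalBasis (𝕜 := ℝ) (by simp) rows, fun i j hj => ?_⟩
  have hlt : Fin.castLE hkn i < j := Fin.lt_def.2 (i.2.trans_le hj)
  simpa [rows] using
    InnerProductSpace.gramSchmidtOrthonormalBasis_inv_triangular (𝕜 := ℝ) (by simp) rows hlt

theorem exists_eq_mul_topRows (X : Matrix (Fin k) (Fin n) ℝ) :
    ∃ (Y : Matrix (Fin k) (Fin k) ℝ) (h : OG n), X = Y * topRows hkn h := by
  obtain ⟨b, hb⟩ := exists_orthonormalBasis_inner_row_eq_zero hkn X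
  let h : Matrix (Fin n) (Fin n) ℝ := .of fun i j => b i j
  have hh : h ∈ Matrix.orthogonalGroup (Fin n) ℝ := by
    rw [Matrix.mem_orthogonalGroup_iff]
    ext i j
    simpa [h, Matrix.mul_apply, Matrix.one_apply, PiLp.inner_apply, mul_comm] using
      orthonormal_iff_ite.1 b.orthonormal i j
  refine ⟨.of fun i l => inner ℝ (b (Fin.castLE hkn l)) (WithLp.toLp 2 (X i)), ⟨h, hh⟩, ?_⟩
  ext i j
  have hexp : X i j = ∑ l, inner ℝ (b l) (WithLp.toLp 2 (X i)) * b l j := by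
    simpa using (congrArg (fun v : Eucl n => v j) (b.sum_repr' (WithLp.toLp 2 (X i)))).symm
  rw [hexp, Matrix.mul_apply]
  refine (Fintype.sum_of_injective _ (Fin.castLE_injective hkn) _ _ (fun l hl => ?_)
    fun _ => rfl).symm
  have hkl : k ≤ l := by
    by_contra! hlt
    exact hl ⟨⟨l, hlt⟩, rfl⟩
  rw [hb i l hkl, zero_mul]

end TopRows

section GLHaar

open scoped Matrix

variable {m n : Type*} [Fintype m] [Fintype n] [DecidableEq m]

/-- The two-sided Haar measure `|det A|^{-m} dA` of the general linear group, as a measure on the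
space of all square matrices. -/
def glHaar (m : Type*) [Fintype m] [DecidableEq m] : Measure (Matrix m m ℝ) :=
  volume.withDensity fun A => ‖A.det‖ₑ⁻¹ ^ Fintype.card m

instance : SFinite (glHaar m) := inferInstanceAs (SFinite (volume.withDensity _))

theorem lintegral_glHaar {u : Matrix m m ℝ → ℝ≥0∞} (hu : Measurable u) :
    ∫⁻ A, u A ∂glHaar m = ∫⁻ A, ‖A.det‖ₑ⁻¹ ^ Fintype.card m * u A :=
  lintegral_withDensity_eq_lintegral_mul _ (by fun_prop) hu

theorem ae_glHaar_det_ne_zero : ∀ᵐ A ∂glHaar m, A.det ≠ 0 :=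
  (withDensity_absolutelyContinuous _ _).ae_le ae_det_ne_zero

theorem lintegral_glHaar_enorm_det_pow {u : Matrix m m ℝ → ℝ≥0∞} (hu : Measurable u) (p : ℕ) :
    ∫⁻ A, u A * ‖A.det‖ₑ ^ (Fintype.card m + p) ∂glHaar m = ∫⁻ A, u A * ‖A.det‖ₑ ^ p := by
  rw [lintegral_glHaar (by fun_prop)]
  refine lintegral_congr_ae ?_
  filter_upwards [ae_det_ne_zero] with A hA
  rw [pow_add, mul_left_comm, ← mul_assoc (_ ^ _), ← mul_pow,
    ENNReal.inv_mul_cancel (enorm_ne_zero.2 hA) enorm_ne_top, one_pow, one_mul]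

theorem inv_enorm_det_mul_pow {Y : Matrix m m ℝ} (hY : Y.det ≠ 0) (A : Matrix m m ℝ) (p : ℕ) :
    ‖(Y * A).det‖ₑ⁻¹ ^ p = ‖Y.det‖ₑ⁻¹ ^ p * ‖A.det‖ₑ⁻¹ ^ p := by
  rw [Matrix.det_mul, enorm_mul, ENNReal.mul_inv (.inl (enorm_ne_zero.2 hY)) (.inl enorm_ne_top),
    mul_pow]

theorem inv_enorm_det_pow_ne_zero (Y : Matrix m m ℝ) (p : ℕ) : ‖Y.det‖ₑ⁻¹ ^ p ≠ 0 :=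
  pow_ne_zero _ (ENNReal.inv_ne_zero.2 enorm_ne_top)

theorem inv_enorm_det_pow_ne_top {Y : Matrix m m ℝ} (hY : Y.det ≠ 0) (p : ℕ) :
    ‖Y.det‖ₑ⁻¹ ^ p ≠ ∞ :=
  ENNReal.pow_ne_top (ENNReal.inv_ne_top.2 (enorm_ne_zero.2 hY))

theorem lintegral_glHaar_mul_left {Y : Matrix m m ℝ} (hY : Y.det ≠ 0) {u : Matrix m m ℝ → ℝ≥0∞}
    (hu : Measurable u) : ∫⁻ A, u (Y * A) ∂glHaar m = ∫⁻ A, u A ∂glHaar m := by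
  have hcov := lintegral_matrix_mul_left (n := m) hY
    (u := fun A => ‖A.det‖ₑ⁻¹ ^ Fintype.card m * u A) (by fun_prop)
  simp only [inv_enorm_det_mul_pow hY, mul_assoc] at hcov
  rw [lintegral_const_mul _ (by fun_prop), ← lintegral_glHaar hu,
    ← lintegral_glHaar (u := fun A => u (Y * A)) (by fun_prop)] at hcov
  exact (ENNReal.mul_right_inj (inv_enorm_det_pow_ne_zero Y _)
    (inv_enorm_det_pow_ne_top hY _)).1 hcov

theorem lintegral_glHaar_mul_right {Y : Matrix m m ℝ} (hY : Y.det ≠ 0) {u : Matrix m m ℝ → ℝ≥0∞}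
    (hu : Measurable u) : ∫⁻ A, u (A * Y) ∂glHaar m = ∫⁻ A, u A ∂glHaar m := by
  have hcov := lintegral_matrix_mul_right (m := m) hY
    (u := fun A => ‖A.det‖ₑ⁻¹ ^ Fintype.card m * u A) (by fun_prop)
  simp only [Matrix.det_mul_comm _ Y, inv_enorm_det_mul_pow hY, mul_assoc] at hcov
  rw [lintegral_const_mul _ (by fun_prop), ← lintegral_glHaar hu,
    ← lintegral_glHaar (u := fun A => u (A * Y)) (by fun_prop)] at hcov
  exact (ENNReal.mul_right_inj (inv_enorm_det_pow_ne_zero Y _)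
    (inv_enorm_det_pow_ne_top hY _)).1 hcov

end GLHaar

section OrbitWeight

open scoped Matrix

variable {m n : Type*} [Fintype m]

theorem volume_setOf_forall_transpose_mul_self_le_one_ne_zero :
    volume {A : Matrix m m ℝ | ∀ i, (Aᵀ * A) i i ≤ 1} ≠ 0 := by
  have hcont (i : m) : Continuous fun A : Matrix m m ℝ => (Aᵀ * A) i i := by fun_prop
  have hnhds : {A : Matrix m m ℝ | ∀ i, (Aᵀ * A) i i ≤ 1} ∈ 𝓝 0 := by
    filter_upwards [eventually_all.2 fun i =>
      (hcont i).continuousAt.eventually_lt (continuousAt_const (y := 1)) (by simp)] with A hA i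
    exact (hA i).le
  exact (Measure.measure_pos_of_mem_nhds volume hnhds).ne'

theorem volume_setOf_forall_transpose_mul_self_le_one_ne_top :
    volume {A : Matrix m m ℝ | ∀ i, (Aᵀ * A) i i ≤ 1} ≠ ∞ := by
  have hcompact : IsCompact (univ.pi fun _ : m => univ.pi fun _ : m => Icc (-1 : ℝ) 1) :=
    isCompact_univ_pi fun _ => isCompact_univ_pi fun _ => isCompact_Icc
  refine measure_ne_top_of_subset ?_ (hcompact.measure_ne_top (μ := (volume : Measure (m → m → ℝ))))
  intro A hA j _ i _
  have hcol : ∑ j, A j i ^ 2 ≤ 1 := by simpa [Matrix.mul_apply, sq] using hA i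
  exact abs_le.1 ((sq_le_one_iff_abs_le_one _).1 ((Finset.single_le_sum
    (fun j _ => sq_nonneg (A j i)) (Finset.mem_univ j)).trans hcol))

variable [Fintype n] [DecidableEq m]

/-- A weight on `m × n` matrices whose average over every orbit of the general linear group acting
on the left is the same finite positive number; it plays the role of a cutoff in unfolding
integrals over the space of matrices along these orbits. -/
def orbitWeight (X : Matrix m n ℝ) : ℝ≥0∞ :=
  {X : Matrix m n ℝ | ∀ i, (X * Xᵀ)⁻¹ i i ≤ 1}.indicator
    (fun X => ‖gramVolume X‖ₑ⁻¹ ^ Fintype.card m) X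

@[fun_prop]
theorem measurable_orbitWeight : Measurable (orbitWeight : Matrix m n ℝ → ℝ≥0∞) := by
  have hgram : Measurable fun X : Matrix m n ℝ => (X * Xᵀ)⁻¹ :=
    (by fun_prop : Continuous fun X : Matrix m n ℝ => X * Xᵀ).measurable.inv
  have hset : MeasurableSet {X : Matrix m n ℝ | ∀ i, (X * Xᵀ)⁻¹ i i ≤ 1} := by
    simp only [ofPred_forall]
    exact .iInter fun i => measurableSet_le
      (measurable_pi_iff.1 (measurable_pi_iff.1 hgram i) i) measurable_const
  exact (measurable_gramVolume.enorm.inv.pow_const _).indicator hset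

theorem orbitWeight_mul_right [DecidableEq n] (X : Matrix m n ℝ) {U : Matrix n n ℝ}
    (hU : U * Uᵀ = 1) : orbitWeight (X * U) = orbitWeight X := by
  have hgram : X * U * (X * U)ᵀ = X * Xᵀ := by
    rw [Matrix.transpose_mul, Matrix.mul_assoc, ← Matrix.mul_assoc U, hU, Matrix.one_mul]
  simp only [orbitWeight, indicator, mem_ofPred_eq, gramVolume, hgram]
  congr

theorem inv_enorm_det_pow_mul_orbitWeight {A : Matrix m m ℝ} (hA : A.det ≠ 0) {U : Matrix m n ℝ}
    (hU : U * Uᵀ = 1) :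
    ‖A.det‖ₑ⁻¹ ^ Fintype.card m * orbitWeight (A⁻¹ * U) =
      {A : Matrix m m ℝ | ∀ i, (Aᵀ * A) i i ≤ 1}.indicator 1 A := by
  have hAu : IsUnit A.det := isUnit_iff_ne_zero.2 hA
  have hgram : (A⁻¹ * U * (A⁻¹ * U)ᵀ)⁻¹ = Aᵀ * A := by
    rw [Matrix.transpose_mul, Matrix.mul_assoc, ← Matrix.mul_assoc U, hU, Matrix.one_mul,
      Matrix.mul_inv_rev, Matrix.transpose_nonsing_inv,
      Matrix.nonsing_inv_nonsing_inv _ (by rwa [Matrix.det_transpose]),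
      Matrix.nonsing_inv_nonsing_inv _ hAu]
  have hvol : ‖gramVolume (A⁻¹ * U)‖ₑ⁻¹ = ‖A.det‖ₑ := by
    rw [gramVolume_mul_left, gramVolume_eq_one hU, mul_one, Matrix.det_nonsing_inv,
      Ring.inverse_eq_inv', Real.enorm_abs, enorm_inv hA, inv_inv]
  simp only [orbitWeight, indicator, mem_ofPred_eq, hgram, hvol, mul_ite, mul_zero, ← mul_pow,
    ENNReal.inv_mul_cancel (enorm_ne_zero.2 hA) enorm_ne_top, one_pow, Pi.one_apply]

theorem lintegral_orbitWeight_inv_mul {U : Matrix m n ℝ} (hU : U * Uᵀ = 1) :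
    ∫⁻ A, orbitWeight (A⁻¹ * U) ∂glHaar m =
      volume {A : Matrix m m ℝ | ∀ i, (Aᵀ * A) i i ≤ 1} := by
  have hset : MeasurableSet {A : Matrix m m ℝ | ∀ i, (Aᵀ * A) i i ≤ 1} := by
    simp only [ofPred_forall]
    exact .iInter fun i => measurableSet_le
      (by fun_prop : Continuous fun A : Matrix m m ℝ => (Aᵀ * A) i i).measurable measurable_const
  rw [lintegral_glHaar (u := fun A => orbitWeight (A⁻¹ * U)) (by fun_prop),
    ← lintegral_indicator_one hset]
  refine lintegral_congr_ae ?_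
  filter_upwards [ae_det_ne_zero] with A hA
  exact inv_enorm_det_pow_mul_orbitWeight hA hU

end OrbitWeight

theorem isInvInvariant_of_isMulLeftInvariant {G : Type*} [Group G] [MeasurableSpace G]
    [MeasurableMul₂ G] [MeasurableInv G] (ν : Measure G) [IsProbabilityMeasure ν]
    [ν.IsMulLeftInvariant] : ν.IsInvInvariant := by
  refine ⟨Measure.ext_of_lintegral _ fun u hu => ?_⟩
  rw [Measure.inv_def, lintegral_map hu measurable_inv]
  calc ∫⁻ g, u g⁻¹ ∂ν = ∫⁻ h, ∫⁻ g, u (h⁻¹ * g)⁻¹ ∂ν ∂ν := by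
        simp only [lintegral_mul_left_eq_self (μ := ν) (fun g => u g⁻¹), lintegral_const,
          measure_univ, mul_one]
    _ = ∫⁻ h, ∫⁻ g, u (g⁻¹ * h) ∂ν ∂ν := by simp only [mul_inv_rev, inv_inv]
    _ = ∫⁻ g, ∫⁻ h, u (g⁻¹ * h) ∂ν ∂ν :=
        lintegral_lintegral_swap (by unfold Function.uncurry; fun_prop)
    _ = ∫⁻ g, u g ∂ν := by
        simp only [lintegral_mul_left_eq_self (μ := ν) u, lintegral_const, measure_univ, mul_one]

section OrbitIntegral

variable {m n : Type*} [Fintype m] [Fintype n] [DecidableEq m] {F : Matrix m n ℝ → ℝ≥0∞}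

/-- The integral of `F` over the orbit of `X` under left multiplication by the general linear
group, with the weight `|det A|ⁿ` that makes it the density of the orbit in the space of all
`m × n` matrices. -/
def orbitIntegral (F : Matrix m n ℝ → ℝ≥0∞) (X : Matrix m n ℝ) : ℝ≥0∞ :=
  ∫⁻ A : Matrix m m ℝ, F (A * X) * ‖A.det‖ₑ ^ Fintype.card n ∂glHaar m

@[fun_prop]
theorem measurable_orbitIntegral (hF : Measurable F) : Measurable (orbitIntegral F) := by
  refine Measurable.lintegral_prod_right' (f := fun p : Matrix m n ℝ × Matrix m m ℝ =>
    F (p.2 * p.1) * ‖p.2.det‖ₑ ^ Fintype.card n) ?_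
  fun_prop

theorem orbitIntegral_mul_left (hF : Measurable F) {Y : Matrix m m ℝ} (hY : Y.det ≠ 0)
    (X : Matrix m n ℝ) :
    orbitIntegral F (Y * X) = ‖Y.det‖ₑ⁻¹ ^ Fintype.card n * orbitIntegral F X := by
  have hpow : ‖Y.det‖ₑ⁻¹ ^ Fintype.card n * ‖Y.det‖ₑ ^ Fintype.card n = 1 := by
    rw [← mul_pow, ENNReal.inv_mul_cancel (enorm_ne_zero.2 hY) enorm_ne_top, one_pow]
  unfold orbitIntegral
  rw [← lintegral_glHaar_mul_right hY (u := fun A => F (A * X) * ‖A.det‖ₑ ^ Fintype.card n)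
    (by fun_prop), ← lintegral_const_mul _ (by fun_prop)]
  refine lintegral_congr fun A => ?_
  rw [Matrix.det_mul, enorm_mul, mul_pow, Matrix.mul_assoc, mul_left_comm, mul_left_comm (_ ^ _),
    hpow, mul_one]

theorem lintegral_orbitWeight_mul_orbitIntegral (hF : Measurable F) :
    ∫⁻ X : Matrix m n ℝ, orbitWeight X * orbitIntegral F X =
      ∫⁻ X : Matrix m n ℝ, F X * ∫⁻ A : Matrix m m ℝ, orbitWeight (A⁻¹ * X) ∂glHaar m := by
  have hsubst {A : Matrix m m ℝ} (hA : A.det ≠ 0) :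
      ∫⁻ X : Matrix m n ℝ, orbitWeight X * (F (A * X) * ‖A.det‖ₑ ^ Fintype.card n) =
        ∫⁻ X : Matrix m n ℝ, F X * orbitWeight (A⁻¹ * X) := by
    have hpow : ‖A.det‖ₑ ^ Fintype.card n * ‖A.det‖ₑ⁻¹ ^ Fintype.card n = 1 := by
      rw [← mul_pow, ENNReal.mul_inv_cancel (enorm_ne_zero.2 hA) enorm_ne_top, one_pow]
    have hcov := lintegral_matrix_mul_left hA (u := fun X : Matrix m n ℝ =>
      F X * orbitWeight (A⁻¹ * X)) (by fun_prop)
    simp only [Matrix.nonsing_inv_mul_cancel_left A _ (isUnit_iff_ne_zero.2 hA)] at hcov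
    rw [← one_mul (∫⁻ X : Matrix m n ℝ, F X * _), ← hpow, mul_assoc, ← hcov,
      ← lintegral_const_mul _ (by fun_prop)]
    exact lintegral_congr fun X => by ring
  calc ∫⁻ X : Matrix m n ℝ, orbitWeight X * orbitIntegral F X
      = ∫⁻ X : Matrix m n ℝ, ∫⁻ A : Matrix m m ℝ,
          orbitWeight X * (F (A * X) * ‖A.det‖ₑ ^ Fintype.card n) ∂glHaar m :=
        lintegral_congr fun X => (lintegral_const_mul _ (by fun_prop)).symm
    _ = ∫⁻ A : Matrix m m ℝ, (∫⁻ X : Matrix m n ℝ,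
          orbitWeight X * (F (A * X) * ‖A.det‖ₑ ^ Fintype.card n)) ∂glHaar m :=
        lintegral_lintegral_swap (by unfold Function.uncurry; fun_prop)
    _ = ∫⁻ A : Matrix m m ℝ,
          (∫⁻ X : Matrix m n ℝ, F X * orbitWeight (A⁻¹ * X)) ∂glHaar m :=
        lintegral_congr_ae (ae_glHaar_det_ne_zero.mono fun A hA => hsubst hA)
    _ = ∫⁻ X : Matrix m n ℝ, ∫⁻ A : Matrix m m ℝ, F X * orbitWeight (A⁻¹ * X) ∂glHaar m :=
        lintegral_lintegral_swap (by unfold Function.uncurry; fun_prop)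
    _ = ∫⁻ X : Matrix m n ℝ, F X * ∫⁻ A : Matrix m m ℝ, orbitWeight (A⁻¹ * X) ∂glHaar m :=
        lintegral_congr fun X => lintegral_const_mul _ (by fun_prop)

end OrbitIntegral

section BlaschkePetkantschin

open scoped Matrix

instance (n : ℕ) : BorelSpace (OG n) := ⟨rfl⟩

instance (n : ℕ) : SecondCountableTopology (OG n) :=
  TopologicalSpace.Subtype.secondCountableTopology _

variable {k n : ℕ}

theorem lintegral_orbitWeight_inv_mul_of_gramVolume_ne_zero {X : Matrix (Fin k) (Fin n) ℝ}
    (hkn : k ≤ n) (hX : gramVolume X ≠ 0) :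
    ∫⁻ A, orbitWeight (A⁻¹ * X) ∂glHaar (Fin k) =
      volume {A : Matrix (Fin k) (Fin k) ℝ | ∀ i, (Aᵀ * A) i i ≤ 1} := by
  obtain ⟨Y, h, rfl⟩ := exists_eq_mul_topRows hkn X
  have hU := topRows_mul_transpose hkn h
  rw [gramVolume_mul_left] at hX
  have hY : Y.det ≠ 0 := abs_ne_zero.1 (left_ne_zero_of_mul hX)
  rw [← lintegral_glHaar_mul_left hY (by fun_prop), ← lintegral_orbitWeight_inv_mul hU]
  refine lintegral_congr fun A => ?_
  rw [Matrix.mul_inv_rev, Matrix.mul_assoc,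
    Matrix.nonsing_inv_mul_cancel_left Y _ (isUnit_iff_ne_zero.2 hY)]

theorem lintegral_mul_orthogonal (g : OG n) {u : Matrix (Fin k) (Fin n) ℝ → ℝ≥0∞}
    (hu : Measurable u) :
    ∫⁻ X : Matrix (Fin k) (Fin n) ℝ, u (X * g.1) = ∫⁻ X, u X := by
  have hdet : ‖g.1.det‖ₑ = 1 := by
    have hgg : g.1 * g.1ᵀ = 1 := (Matrix.mem_orthogonalGroup_iff _ _).1 g.2
    have hsq : g.1.det ^ 2 = 1 := by
      simpa [sq] using congrArg Matrix.det hgg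
    rw [← Real.enorm_abs, (pow_eq_one_iff_of_nonneg (abs_nonneg _) two_ne_zero).1
      ((sq_abs _).trans hsq), enorm_one]
  rw [lintegral_matrix_mul_right (enorm_ne_zero.1 (by simp [hdet])) hu, hdet, inv_one, one_pow,
    one_mul]

variable (ν : Measure (OG n)) [ν.IsMulLeftInvariant]

theorem lintegral_orbitIntegral_mul_orthogonal (hkn : k ≤ n)
    {F : Matrix (Fin k) (Fin n) ℝ → ℝ≥0∞} (hF : Measurable F)
    {X : Matrix (Fin k) (Fin n) ℝ} (hX : gramVolume X ≠ 0) :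
    ∫⁻ g, orbitIntegral F (X * g.1) ∂ν =
      ‖gramVolume X‖ₑ⁻¹ ^ n *
        ∫⁻ g, orbitIntegral F (topRows hkn g) ∂ν := by
  obtain ⟨Y, h, rfl⟩ := exists_eq_mul_topRows hkn X
  rw [gramVolume_mul_left, gramVolume_eq_one (topRows_mul_transpose hkn h), mul_one] at hX ⊢
  have hY : Y.det ≠ 0 := abs_ne_zero.1 hX
  have horbit (g : OG n) :
      orbitIntegral F (Y * topRows hkn h * g.1) =
        ‖Y.det‖ₑ⁻¹ ^ n * orbitIntegral F (topRows hkn (h * g : OG n)) := by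
    rw [Matrix.mul_assoc, orbitIntegral_mul_left hF hY, Fintype.card_fin, Submonoid.coe_mul,
      topRows_mul]
  simp only [horbit, Real.enorm_abs]
  rw [lintegral_const_mul _ (by fun_prop), lintegral_mul_left_eq_self
    (fun g : OG n => orbitIntegral F (topRows hkn g))]

variable [IsProbabilityMeasure ν]

theorem lintegral_orbitWeight_mul_orbitIntegral_eq_average (hkn : k ≤ n)
    {F : Matrix (Fin k) (Fin n) ℝ → ℝ≥0∞} (hF : Measurable F) :
    ∫⁻ X, orbitWeight X * orbitIntegral F X =
      (∫⁻ X : Matrix (Fin k) (Fin n) ℝ, orbitWeight X * ‖gramVolume X‖ₑ⁻¹ ^ n) *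
        ∫⁻ g, orbitIntegral F (topRows hkn g) ∂ν := by
  have hrotate (g : OG n) : ∫⁻ X, orbitWeight X * orbitIntegral F X =
      ∫⁻ X : Matrix (Fin k) (Fin n) ℝ, orbitWeight X * orbitIntegral F (X * g.1) := by
    rw [← lintegral_mul_orthogonal g (by fun_prop)]
    simp only [orbitWeight_mul_right _ ((Matrix.mem_orthogonalGroup_iff _ _).1 g.2)]
  calc ∫⁻ X, orbitWeight X * orbitIntegral F X
      = ∫⁻ _ : OG n, (∫⁻ X, orbitWeight X * orbitIntegral F X) ∂ν := by
        rw [lintegral_const, measure_univ, mul_one]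
    _ = ∫⁻ g, (∫⁻ X : Matrix (Fin k) (Fin n) ℝ,
          orbitWeight X * orbitIntegral F (X * g.1)) ∂ν := lintegral_congr hrotate
    _ = ∫⁻ X : Matrix (Fin k) (Fin n) ℝ,
          ∫⁻ g, orbitWeight X * orbitIntegral F (X * g.1) ∂ν :=
        lintegral_lintegral_swap (by unfold Function.uncurry; fun_prop)
    _ = ∫⁻ X, orbitWeight X * ‖gramVolume X‖ₑ⁻¹ ^ n *
          ∫⁻ g, orbitIntegral F (topRows hkn g) ∂ν := by
        refine lintegral_congr_ae ?_
        filter_upwards [ae_gramVolume_ne_zero (Fin.castLEEmb hkn)] with X hX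
        rw [lintegral_const_mul _ (by fun_prop),
          lintegral_orbitIntegral_mul_orthogonal ν hkn hF hX, mul_assoc]
    _ = _ := lintegral_mul_const _ (by fun_prop)

theorem exists_lintegral_eq_mul_lintegral_orbitIntegral (hkn : k ≤ n) :
    ∃ c : ℝ≥0∞, ∀ F : Matrix (Fin k) (Fin n) ℝ → ℝ≥0∞, Measurable F →
      ∫⁻ X, F X = c * ∫⁻ g, orbitIntegral F (topRows hkn g) ∂ν := by
  let V := volume {A : Matrix (Fin k) (Fin k) ℝ | ∀ i, (Aᵀ * A) i i ≤ 1}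
  let C := ∫⁻ X : Matrix (Fin k) (Fin n) ℝ, orbitWeight X * ‖gramVolume X‖ₑ⁻¹ ^ n
  refine ⟨V⁻¹ * C, fun F hF => ?_⟩
  have hunfold : ∫⁻ X, orbitWeight X * orbitIntegral F X = V * ∫⁻ X, F X := by
    rw [lintegral_orbitWeight_mul_orbitIntegral hF, mul_comm V, ← lintegral_mul_const _ hF]
    refine lintegral_congr_ae ?_
    filter_upwards [ae_gramVolume_ne_zero (Fin.castLEEmb hkn)] with X hX
    rw [lintegral_orbitWeight_inv_mul_of_gramVolume_ne_zero hkn hX]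
  rw [mul_assoc, ← lintegral_orbitWeight_mul_orbitIntegral_eq_average ν hkn hF, hunfold,
    ← mul_assoc, ENNReal.inv_mul_cancel
    volume_setOf_forall_transpose_mul_self_le_one_ne_zero
    volume_setOf_forall_transpose_mul_self_le_one_ne_top, one_mul]

end BlaschkePetkantschin

section Rows

open scoped Matrix

variable {k n : ℕ}

/-- The rows of a matrix as vectors of Euclidean space. -/
def euclRows (X : Matrix (Fin k) (Fin n) ℝ) (i : Fin k) : Eucl n := WithLp.toLp 2 (X i)

theorem measurePreserving_euclRows :
    MeasurePreserving (euclRows : Matrix (Fin k) (Fin n) ℝ → Fin k → Eucl n) :=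
  volume_preserving_pi fun _ => PiLp.volume_preserving_toLp (Fin n)

@[fun_prop]
theorem measurable_euclRows : Measurable (euclRows : Matrix (Fin k) (Fin n) ℝ → Fin k → Eucl n) :=
  measurePreserving_euclRows.measurable

theorem euclRows_mul {m : ℕ} (A : Matrix (Fin m) (Fin k) ℝ) (X : Matrix (Fin k) (Fin n) ℝ)
    (i : Fin m) : euclRows (A * X) i = Matrix.toEuclideanLin Xᵀ (euclRows A i) := by
  ext j
  simp [euclRows, Matrix.mul_apply_eq_vecMul, Matrix.mulVec_transpose, Matrix.toLpLin_apply]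

theorem lintegral_prod_euclRows {q : Eucl n → ℝ≥0∞} (hq : Measurable q) :
    ∫⁻ X : Matrix (Fin k) (Fin n) ℝ, ∏ i, q (euclRows X i) = (∫⁻ z, q z) ^ k := by
  rw [measurePreserving_euclRows.lintegral_comp (f := fun x => ∏ i, q (x i)) (by fun_prop),
    volume_pi, lintegral_fin_prod_eq_prod _ fun _ => hq, Finset.prod_const, Finset.card_fin]

/-- The determinant as an alternating form in the rows. -/
def detForm (k : ℕ) : Eucl k [⋀^Fin k]→L[ℝ] ℝ where
  __ := Matrix.detRowAlternating.compLinearMap (WithLp.linearEquiv 2 ℝ (Fin k → ℝ)).toLinearMap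
  cont := Continuous.matrix_det (A := fun x : Fin k → Eucl k => Matrix.of fun i => (x i).ofLp)
    (by fun_prop)

theorem detForm_euclRows (A : Matrix (Fin k) (Fin k) ℝ) : detForm k (euclRows A) = A.det := rfl

/-- The isometric embedding `a ↦ aX` of row vectors, for a matrix `X` with orthonormal rows. -/
def rowIsometry {X : Matrix (Fin k) (Fin n) ℝ} (hX : X * Xᵀ = 1) : Eucl k →ₗᵢ[ℝ] Eucl n :=
  (Matrix.toEuclideanLin Xᵀ).isometryOfInner fun a b => by
    have hadjoint : (Matrix.toEuclideanLin Xᵀ).adjoint = Matrix.toEuclideanLin X := by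
      rw [← Matrix.toEuclideanLin_conjTranspose_eq_adjoint,
        Matrix.conjTranspose_eq_transpose_of_trivial, Matrix.transpose_transpose]
    rw [← LinearMap.adjoint_inner_right, hadjoint]
    simp [Matrix.toLpLin_apply, Matrix.mulVec_mulVec, hX]

theorem stdSubspace_eq_range (hkn : k ≤ n) :
    stdSubspace n k = LinearMap.range (Matrix.toEuclideanLin (topRows hkn 1)ᵀ) := by
  have himage (i : Fin k) : Matrix.toEuclideanLin (topRows hkn 1)ᵀ (EuclideanSpace.single i 1) =
      EuclideanSpace.single (Fin.castLE hkn i) 1 := by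
    ext j
    simp [topRows, Matrix.toLpLin_apply, Matrix.one_apply]
  rw [LinearMap.range_eq_map, ← (EuclideanSpace.basisFun (Fin k) ℝ).toBasis.span_eq,
    Submodule.map_span, ← Set.range_comp, stdSubspace]
  congr 1
  ext v
  constructor
  · rintro ⟨i, hi, rfl⟩
    exact ⟨⟨i, hi⟩, by simpa using himage ⟨i, hi⟩⟩
  · rintro ⟨i, rfl⟩
    exact ⟨Fin.castLE hkn i, i.2, by simpa using himage i⟩

theorem lintegral_stdSubspace (hkn : k ≤ n) {u : Eucl n → ℝ≥0∞} (hu : Measurable u) :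
    ∫⁻ y : stdSubspace n k, u y = ∫⁻ a, u (Matrix.toEuclideanLin (topRows hkn 1)ᵀ a) := by
  have hX := topRows_mul_transpose hkn (1 : OG n)
  have hcomp (H : Submodule ℝ (Eucl n)) (hH : H = LinearMap.range (rowIsometry hX).toLinearMap) :
      ∫⁻ y : H, u y = ∫⁻ a, u (rowIsometry hX a) := by
    subst hH
    exact ((rowIsometry hX).equivRange.measurePreserving.lintegral_comp (by fun_prop)).symm
  exact hcomp _ (stdSubspace_eq_range hkn)

end Rows

section Grinberg

open scoped Matrix

variable {k n : ℕ} {q : Eucl n → ℝ≥0∞}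

@[fun_prop]
theorem measurable_toEuclideanLin_transpose :
    Measurable fun z : Matrix (Fin k) (Fin n) ℝ × Eucl k => Matrix.toEuclideanLin z.1ᵀ z.2 := by
  have hcont : Continuous fun z : Matrix (Fin k) (Fin n) ℝ × Eucl k => z.1ᵀ *ᵥ z.2.ofLp := by
    fun_prop
  exact ((PiLp.continuous_toLp 2 _).comp hcont).measurable

/-- The measure on `ℝᵏ` whose density is `q` on the row space of `X`, in the coordinates
`a ↦ aX`. -/
def sectionMeasure (q : Eucl n → ℝ≥0∞) (X : Matrix (Fin k) (Fin n) ℝ) : Measure (Eucl k) :=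
  volume.withDensity fun a => q (Matrix.toEuclideanLin Xᵀ a)

theorem sectionMeasure_univ (q : Eucl n → ℝ≥0∞) (X : Matrix (Fin k) (Fin n) ℝ) :
    sectionMeasure q X univ = ∫⁻ a, q (Matrix.toEuclideanLin Xᵀ a) := by
  rw [sectionMeasure, withDensity_apply _ .univ, Measure.restrict_univ]

@[fun_prop]
theorem measurable_sectionMeasure_univ (hq : Measurable q) :
    Measurable fun X : Matrix (Fin k) (Fin n) ℝ => sectionMeasure q X univ := by
  simp only [sectionMeasure_univ]
  exact Measurable.lintegral_prod_right'
    (f := fun z : Matrix (Fin k) (Fin n) ℝ × Eucl k => q (Matrix.toEuclideanLin z.1ᵀ z.2))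
    (by fun_prop)

theorem sectionMeasure_indicator_closedBall {X : Matrix (Fin k) (Fin n) ℝ} (hX : X * Xᵀ = 1) :
    sectionMeasure ((Metric.closedBall 0 1).indicator 1) X =
      volume.restrict (Metric.closedBall 0 1) := by
  have hball : (Metric.closedBall 0 1).indicator 1 ∘ Matrix.toEuclideanLin Xᵀ =
      (Metric.closedBall (0 : Eucl k) 1).indicator (1 : Eucl k → ℝ≥0∞) := by
    have hpreimage : Matrix.toEuclideanLin Xᵀ ⁻¹' Metric.closedBall 0 1 =
        Metric.closedBall 0 1 := by
      rw [← map_zero (rowIsometry hX)]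
      exact (rowIsometry hX).isometry.preimage_closedBall 0 1
    rw [← hpreimage]
    exact funext fun a => (indicator_comp_right _).symm
  exact (congrArg _ hball).trans (withDensity_indicator_one measurableSet_closedBall)

/-- The `p`-th moment of the volume of the parallelotope spanned by `k` independent points with
common law `μ`. -/
def detMoment (p : ℕ) (μ : Measure (Eucl k)) : ℝ≥0∞ :=
  tupleIntegral (fun x => |detForm k x| ^ p) μ

theorem orbitIntegral_prod_euclRows (hkn : k ≤ n) (hq : Measurable q) (hq1 : ∀ z, q z ≤ 1)
    (X : Matrix (Fin k) (Fin n) ℝ) :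
    orbitIntegral (fun Y => ∏ i, q (euclRows Y i)) X =
      detMoment (n - k) (sectionMeasure q X) := by
  have hcard : Fintype.card (Fin n) = Fintype.card (Fin k) + (n - k) := by simp [hkn]
  have htuple : Measurable fun x : Fin k → Eucl k =>
      (∏ i, q (Matrix.toEuclideanLin Xᵀ (x i))) * ENNReal.ofReal (|detForm k x| ^ (n - k)) := by
    fun_prop
  rw [detMoment, sectionMeasure, tupleIntegral_withDensity (by fun_prop) (by fun_prop)
    fun a => hq1 _]
  refine Eq.trans ?_ (measurePreserving_euclRows.lintegral_comp htuple)
  rw [orbitIntegral, hcard, lintegral_glHaar_enorm_det_pow (by fun_prop)]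
  simp only [euclRows_mul, detForm_euclRows, ENNReal.ofReal_pow (abs_nonneg _),
    Real.enorm_eq_ofReal_abs]

variable (ν : Measure (OG n)) [IsProbabilityMeasure ν] [ν.IsMulLeftInvariant]

theorem exists_lintegral_pow_eq_mul_lintegral_detMoment (hkn : k ≤ n) :
    ∃ c : ℝ≥0∞, ∀ q : Eucl n → ℝ≥0∞, Measurable q → (∀ z, q z ≤ 1) →
      (∫⁻ z, q z) ^ k =
        c * ∫⁻ g : OG n, detMoment (n - k) (sectionMeasure q (topRows hkn g)) ∂ν := by
  obtain ⟨c, hc⟩ := exists_lintegral_eq_mul_lintegral_orbitIntegral ν hkn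
  refine ⟨c, fun q hq hq1 => ?_⟩
  simp only [← orbitIntegral_prod_euclRows hkn hq hq1]
  rw [← lintegral_prod_euclRows hq, hc _ (by fun_prop)]

theorem detMoment_restrict_closedBall_le (hk : k ≠ 0) (hkn : k ≤ n) (hq1 : ∀ z, q z ≤ 1)
    (X : Matrix (Fin k) (Fin n) ℝ) :
    (sectionMeasure q X univ / volume (Metric.closedBall (0 : Eucl k) 1)) ^ n *
        detMoment (n - k) (volume.restrict (Metric.closedBall (0 : Eucl k) 1)) ≤
      detMoment (n - k) (sectionMeasure q X) := by
  have hμ : sectionMeasure q X ≤ volume := withDensity_le_self_of_le_one fun a => hq1 _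
  simpa only [Nat.add_sub_cancel' hkn, detMoment] using
    busemann (detForm k) finrank_euclideanSpace_fin (n - k) hk hμ

theorem lintegral_sectionMeasure_topRows_pow_le (hk : k ≠ 0) (hkn : k ≤ n) (hq : Measurable q)
    (hq1 : ∀ z, q z ≤ 1) :
    volume (Metric.closedBall (0 : Eucl n) 1) ^ k *
        ∫⁻ g : OG n, (sectionMeasure q (topRows hkn g) univ /
          volume (Metric.closedBall (0 : Eucl k) 1)) ^ n ∂ν ≤
      (∫⁻ z, q z) ^ k := by
  obtain ⟨c, hc⟩ := exists_lintegral_pow_eq_mul_lintegral_detMoment ν hkn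
  have hball := hc ((Metric.closedBall 0 1).indicator 1)
    (measurable_one.indicator measurableSet_closedBall) (indicator_le_self' (by simp))
  simp only [sectionMeasure_indicator_closedBall (topRows_mul_transpose hkn _),
    lintegral_indicator_one measurableSet_closedBall, lintegral_const, measure_univ,
    mul_one] at hball
  rw [hball, hc q hq hq1, mul_assoc]
  gcongr
  rw [← lintegral_const_mul _ (by fun_prop)]
  refine lintegral_mono fun g => ?_
  rw [mul_comm]
  exact detMoment_restrict_closedBall_le hk hkn hq1 _

theorem lintegral_stdSubspace_orthogonal (hkn : k ≤ n) (hq : Measurable q) (g : OG n) :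
    ∫⁻ y : stdSubspace n k, q (Matrix.toEuclideanLin g.1 y) =
      sectionMeasure q (topRows hkn (g⁻¹ : OG n)) univ := by
  have hrows : (topRows hkn (g⁻¹ : OG n).1)ᵀ = g.1 * (topRows hkn 1)ᵀ := by
    rw [← one_mul (g⁻¹ : OG n).1, topRows_mul, Matrix.transpose_mul]
    rfl
  have hg : Measurable (Matrix.toEuclideanLin g.1) :=
    (LinearMap.continuous_of_finiteDimensional _).measurable
  rw [lintegral_stdSubspace hkn (u := fun y => q (Matrix.toEuclideanLin g.1 y)) (hq.comp hg),
    sectionMeasure_univ, hrows]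
  simp [Matrix.toLpLin_apply, Matrix.mulVec_mulVec]

theorem lintegral_lintegral_stdSubspace_pow_le (hk : k ≠ 0) (hkn : k ≤ n) (hq : Measurable q)
    (hq1 : ∀ z, q z ≤ 1) :
    volume (Metric.closedBall (0 : Eucl n) 1) ^ k *
        ∫⁻ g : OG n, (∫⁻ y : stdSubspace n k, q (Matrix.toEuclideanLin g.1 y)) ^ n ∂ν ≤
      volume (Metric.closedBall (0 : Eucl k) 1) ^ n * (∫⁻ z, q z) ^ k := by
  have := isInvInvariant_of_isMulLeftInvariant ν
  have hball0 := (Metric.measure_closedBall_pos (volume : Measure (Eucl k)) 0 one_pos).ne'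
  have hball : volume (Metric.closedBall (0 : Eucl k) 1) ≠ ∞ := measure_closedBall_lt_top.ne
  set ωk := volume (Metric.closedBall (0 : Eucl k) 1)
  set ωn := volume (Metric.closedBall (0 : Eucl n) 1)
  have hinv : ωk ^ n * ωk⁻¹ ^ n = 1 := by
    rw [← mul_pow, ENNReal.mul_inv_cancel hball0 hball, one_pow]
  simp only [lintegral_stdSubspace_orthogonal hkn hq]
  calc ωn ^ k * ∫⁻ g : OG n, sectionMeasure q (topRows hkn (g⁻¹ : OG n)) univ ^ n ∂ν
      = ωn ^ k * ∫⁻ g : OG n, sectionMeasure q (topRows hkn g) univ ^ n ∂ν := by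
        rw [lintegral_inv_eq_self fun g : OG n => sectionMeasure q (topRows hkn g) univ ^ n]
    _ = ωk ^ n * (ωn ^ k * ∫⁻ g : OG n, (sectionMeasure q (topRows hkn g) univ / ωk) ^ n ∂ν) := by
        simp only [div_eq_mul_inv, mul_pow]
        rw [lintegral_mul_const _ (by fun_prop), ← mul_assoc (ωn ^ k), mul_comm _ (ωk⁻¹ ^ n),
          ← mul_assoc, hinv, one_mul]
    _ ≤ ωk ^ n * (∫⁻ z, q z) ^ k := by
        gcongr
        exact lintegral_sectionMeasure_topRows_pow_le ν hk hkn hq hq1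

theorem lintegral_lintegral_stdSubspace_pow_le_of_le (hk : k ≠ 0) (hkn : k ≤ n)
    (hq : Measurable q) {M : ℝ≥0∞} (hM : M ≠ ∞) (hqM : ∀ z, q z ≤ M) :
    volume (Metric.closedBall (0 : Eucl n) 1) ^ k *
        ∫⁻ g : OG n, (∫⁻ y : stdSubspace n k, q (Matrix.toEuclideanLin g.1 y)) ^ n ∂ν ≤
      volume (Metric.closedBall (0 : Eucl k) 1) ^ n * (∫⁻ z, q z) ^ k * M ^ (n - k) := by
  rcases eq_or_ne M 0 with rfl | hM0
  · have hn : n ≠ 0 := by lia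
    simp [fun z => le_antisymm (hqM z) zero_le, hn]
  have hscale (z : Eucl n) : q z = M * (q z / M) := (ENNReal.mul_div_cancel hM0 hM).symm
  have hsection (g : OG n) : ∫⁻ y : stdSubspace n k, q (Matrix.toEuclideanLin g.1 y) =
      M * ∫⁻ y : stdSubspace n k, q (Matrix.toEuclideanLin g.1 y) / M := by
    rw [← lintegral_const_mul' _ _ hM]
    exact lintegral_congr fun y => hscale _
  have hintegral : ∫⁻ z, q z = M * ∫⁻ z, q z / M := by
    rw [← lintegral_const_mul' _ _ hM]
    exact lintegral_congr hscale
  calc volume (Metric.closedBall (0 : Eucl n) 1) ^ k *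
        ∫⁻ g : OG n, (∫⁻ y : stdSubspace n k, q (Matrix.toEuclideanLin g.1 y)) ^ n ∂ν
      = M ^ n * (volume (Metric.closedBall (0 : Eucl n) 1) ^ k * ∫⁻ g : OG n,
          (∫⁻ y : stdSubspace n k, q (Matrix.toEuclideanLin g.1 y) / M) ^ n ∂ν) := by
        simp only [hsection, mul_pow]
        rw [lintegral_const_mul' _ _ (ENNReal.pow_ne_top hM), mul_left_comm]
    _ ≤ M ^ n * (volume (Metric.closedBall (0 : Eucl k) 1) ^ n * (∫⁻ z, q z / M) ^ k) := by
        gcongr M ^ n * ?_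
        exact lintegral_lintegral_stdSubspace_pow_le ν hk hkn (hq.div_const M)
          fun z => ENNReal.div_le_of_le_mul (by simpa using hqM z)
    _ = volume (Metric.closedBall (0 : Eucl k) 1) ^ n * (∫⁻ z, q z) ^ k * M ^ (n - k) := by
        rw [hintegral, ← pow_mul_pow_sub M hkn]
        ring

end Grinberg

section LogConcave

variable {n : ℕ} {f : Eucl n → ℝ}

theorem exists_pos_measure_setOf_le_ne_zero {X : Type*} [MeasurableSpace X] {μ : Measure X}
    {f : X → ℝ} (hpos : 0 < ∫ x, f x ∂μ) : ∃ ε, 0 < ε ∧ μ {x | ε ≤ f x} ≠ 0 := by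
  by_contra! hnull
  have hle : ∀ᵐ x ∂μ, f x ≤ 0 := by
    have hlt : ∀ᵐ x ∂μ, ∀ m : ℕ, f x < 1 / ((m : ℝ) + 1) := ae_all_iff.2 fun m => by
      simpa [ae_iff] using hnull _ (Nat.one_div_pos_of_nat (n := m))
    filter_upwards [hlt] with x hx
    exact ge_of_tendsto' tendsto_one_div_add_atTop_nhds_zero_nat fun m => (hx m).le
  exact hpos.not_ge (integral_nonpos_of_ae hle)

theorem IsLogConcave.image_homothety_subset (hf : IsLogConcave f) (x : Eucl n) (ε : ℝ) :
    AffineMap.homothety x (1 / 2 : ℝ) '' {y | ε ≤ f y} ⊆ {z | √(f x) * √ε ≤ f z} := by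
  rintro _ ⟨y, hy : ε ≤ f y, rfl⟩
  have hmid : (1 / 2 : ℝ) • x + (1 - 1 / 2 : ℝ) • y = AffineMap.homothety x (1 / 2 : ℝ) y := by
    rw [AffineMap.homothety_apply, vsub_eq_sub, vadd_eq_add]
    module
  calc √(f x) * √ε ≤ √(f x) * √(f y) := by gcongr
    _ = f x ^ (1 / 2 : ℝ) * f y ^ (1 - 1 / 2 : ℝ) := by
        rw [Real.sqrt_eq_rpow, Real.sqrt_eq_rpow, sub_half]
    _ ≤ f (AffineMap.homothety x (1 / 2 : ℝ) y) :=
        hmid ▸ hf x y (1 / 2) (by norm_num) (by norm_num)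

theorem IsLogConcave.sqrt_mul_measureReal_le_integral (hf : IsLogConcave f) (hf0 : ∀ x, 0 ≤ f x)
    (hfint : Integrable f) (x : Eucl n) (ε : ℝ) :
    √(f x) * √ε * ((1 / 2) ^ n * volume.real {y | ε ≤ f y}) ≤ ∫ y, f y := by
  rcases (by positivity : 0 ≤ √(f x) * √ε).eq_or_lt with h0 | hpos
  · rw [← h0, zero_mul]
    exact integral_nonneg hf0
  have hvol : volume.real (AffineMap.homothety x (1 / 2 : ℝ) '' {y | ε ≤ f y}) =
      (1 / 2) ^ n * volume.real {y | ε ≤ f y} := by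
    simp [Measure.real, Measure.addHaar_image_homothety]
  calc √(f x) * √ε * ((1 / 2) ^ n * volume.real {y | ε ≤ f y})
      ≤ √(f x) * √ε * volume.real {z | √(f x) * √ε ≤ f z} := by
        rw [← hvol]
        gcongr
        · exact (hfint.measure_ge_lt_top hpos).ne
        · exact hf.image_homothety_subset x ε
    _ ≤ ∫ y, f y := mul_meas_ge_le_integral_of_nonneg (ae_of_all _ hf0) hfint _

theorem MemQ0.bddAbove_range (hf : MemQ0 f) : BddAbove (range f) := by
  obtain ⟨hf0, hlc, -, hfint, hpos⟩ := hf
  obtain ⟨ε, hε, hmeas⟩ := exists_pos_measure_setOf_le_ne_zero hpos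
  have hvol : 0 < √ε * ((1 / 2) ^ n * volume.real {y | ε ≤ f y}) := by
    have := ENNReal.toReal_pos hmeas (hfint.measure_ge_lt_top hε).ne
    unfold Measure.real
    positivity
  refine ⟨((∫ y, f y) / (√ε * ((1 / 2) ^ n * volume.real {y | ε ≤ f y}))) ^ 2, ?_⟩
  rintro _ ⟨x, rfl⟩
  rw [← Real.sqrt_le_left (by positivity), le_div_iff₀ hvol, ← mul_assoc]
  exact hlc.sqrt_mul_measureReal_le_integral hf0 hfint x ε

end LogConcave

theorem enorm_integral_integral_stdSubspace_pow_le {n k : ℕ} (hk : k ≠ 0) (hkn : k ≤ n)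
    {f : Eucl n → ℝ} (hf : Measurable f) {M : ℝ≥0∞} (hM : M ≠ ∞) (hfM : ∀ z, ‖f z‖ₑ ≤ M)
    (ν : Measure (OG n)) [IsProbabilityMeasure ν] [ν.IsMulLeftInvariant] :
    ‖∫ g : OG n, (∫ y : stdSubspace n k, f (Matrix.toEuclideanLin g.1 y)) ^ n ∂ν‖ₑ ≤
      volume (Metric.closedBall (0 : Eucl k) 1) ^ n /
        volume (Metric.closedBall (0 : Eucl n) 1) ^ k * (∫⁻ z, ‖f z‖ₑ) ^ k * M ^ (n - k) := by
  have hball0 := (Metric.measure_closedBall_pos (volume : Measure (Eucl n)) 0 one_pos).ne'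
  have hball : volume (Metric.closedBall (0 : Eucl n) 1) ≠ ∞ := measure_closedBall_lt_top.ne
  calc ‖∫ g : OG n, (∫ y : stdSubspace n k, f (Matrix.toEuclideanLin g.1 y)) ^ n ∂ν‖ₑ
      ≤ ∫⁻ g : OG n, (∫⁻ y : stdSubspace n k, ‖f (Matrix.toEuclideanLin g.1 y)‖ₑ) ^ n ∂ν := by
        refine (enorm_integral_le_lintegral_enorm _).trans (lintegral_mono fun g => ?_)
        rw [enorm_pow]
        gcongr
        exact enorm_integral_le_lintegral_enorm _
    _ ≤ (volume (Metric.closedBall (0 : Eucl k) 1) ^ n * (∫⁻ z, ‖f z‖ₑ) ^ k * M ^ (n - k)) /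
          volume (Metric.closedBall (0 : Eucl n) 1) ^ k := by
        rw [ENNReal.le_div_iff_mul_le (.inl (pow_ne_zero _ hball0))
          (.inl (ENNReal.pow_ne_top hball)), mul_comm]
        exact lintegral_lintegral_stdSubspace_pow_le_of_le ν hk hkn hf.enorm hM hfM
    _ = _ := by
        simp only [div_eq_mul_inv]
        ring

theorem functional_grinberg_general (n k : ℕ) (hk1 : 1 ≤ k) (hkn : k ≤ n)
    (f : Eucl n → ℝ) (hf : Measurable f) (hf0 : ∀ x, 0 ≤ f x) (hfint : Integrable f)
    (hbdd : BddAbove (range f))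
    (ν : Measure (OG n)) [IsProbabilityMeasure ν] [ν.IsMulLeftInvariant] :
    (∫ g : OG n,
        (∫ y : stdSubspace n k,
          f ((Matrix.toEuclideanLin (g : Matrix (Fin n) (Fin n) ℝ))
              (y : Eucl n))) ^ n ∂ν) ≤
      (ballVol k ^ n / ballVol n ^ k) * (∫ x, f x) ^ k * supNorm f ^ (n - k) := by
  have hball0 := (Metric.measure_closedBall_pos (volume : Measure (Eucl n)) 0 one_pos).ne'
  have hball : volume (Metric.closedBall (0 : Eucl k) 1) ≠ ∞ := measure_closedBall_lt_top.ne
  have hsup0 : 0 ≤ supNorm f := (hf0 0).trans (le_ciSup hbdd 0)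
  have hsup (z : Eucl n) : ‖f z‖ₑ ≤ ENNReal.ofReal (supNorm f) := by
    rw [Real.enorm_of_nonneg (hf0 z)]
    exact ENNReal.ofReal_le_ofReal (le_ciSup hbdd z)
  have hmain :=
    enorm_integral_integral_stdSubspace_pow_le (by lia) hkn hf ENNReal.ofReal_ne_top hsup ν
  refine (Real.le_norm_self _).trans ?_
  rw [← toReal_enorm]
  refine (ENNReal.toReal_mono ?_ hmain).trans_eq ?_
  · have := hfint.2.ne
    finiteness
  · simp [ballVol, hsup0, ← integral_norm_eq_lintegral_enorm hf.aestronglyMeasurable,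
      abs_of_nonneg, hf0]

/-- **The functional analog of Grinberg's inequality** (Theorem 5.1):
for `f ∈ Q₀ⁿ` and `1 ≤ k ≤ n`,
`∫_{O(n)} (∫_{H₀ᵏ} f(gy) dλ_k(y))ⁿ dν(g) ≤ (ω_kⁿ/ω_nᵏ)·‖f‖₁ᵏ·‖f‖_∞^{n−k}`,
where `ν` is the Haar probability measure on `O(n)`. -/
theorem functional_grinberg (n k : ℕ) (hk1 : 1 ≤ k) (hkn : k ≤ n)
    (f : Eucl n → ℝ) (hf : MemQ0 f)
    (ν : Measure (OG n)) [IsProbabilityMeasure ν] [ν.IsMulLeftInvariant] :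
    (∫ g : OG n,
        (∫ y : stdSubspace n k,
          f ((Matrix.toEuclideanLin (g : Matrix (Fin n) (Fin n) ℝ))
              (y : Eucl n))) ^ n ∂ν) ≤
      (ballVol k ^ n / ballVol n ^ k) * (∫ x, f x) ^ k * supNorm f ^ (n - k) := by
  obtain ⟨hf0, -, husc, hfint, -⟩ := id hf
  exact functional_grinberg_general n k hk1 hkn f husc.measurable hf0 hfint hf.bddAbove_range ν
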